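/- arXiv:2407.20877 — 2 statements merged into one kernel-verified Lean document; each statement's English description precedes it below -/
import Mathlib

section
/- Let A be a minimal brick-infinite finite-dimensional algebra over an algebraically closed field (i.e. A has infinitely many isomorphism classes of bricks, but for every nonzero two-sided ideal I of A the quotient algebra A/I has only finitely many isomorphism classes of bricks). If A admits infinitely many pairwise non-isomorphic unfaithful bricks, then there exists a positive integer d such that A admits an infinite semibrick consisting of bricks all of k-dimension d. -/
universe u v

open Module

/-- A finite-dimensional left module over the `k`-algebra `A`. -/
structure FDMod (k A : Type u) [Field k] [Ring A] [Algebra k A] : Type (u + 1) where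
  carrier : Type u
  [addCommGroup : AddCommGroup carrier]
  [moduleK : Module k carrier]
  [moduleA : Module A carrier]
  [tower : IsScalarTower k A carrier]
  [fd : FiniteDimensional k carrier]

attribute [instance] FDMod.addCommGroup FDMod.moduleK FDMod.moduleA FDMod.tower FDMod.fd

variable {k A : Type u} [Field k] [Ring A] [Algebra k A]

/-- `M` is a brick: `M ≠ 0` and every `A`-endomorphism of `M` is a `k`-scalar,
i.e. `End_A(M) ≅ k`. -/
def FDMod.IsBrick (M : FDMod k A) : Prop :=
  Nontrivial M.carrier ∧ ∀ f : M.carrier →ₗ[A] M.carrier, ∃ c : k, ∀ x : M.carrier, f x = c • x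

/-- `M` and `N` are Hom-orthogonal: `Hom_A(M,N) = 0` and `Hom_A(N,M) = 0`. -/
def FDMod.HomOrth (M N : FDMod k A) : Prop :=
  (∀ f : M.carrier →ₗ[A] N.carrier, f = 0) ∧ (∀ f : N.carrier →ₗ[A] M.carrier, f = 0)

/-- `M` and `N` are isomorphic as `A`-modules. -/
def FDMod.Iso (M N : FDMod k A) : Prop :=
  Nonempty (M.carrier ≃ₗ[A] N.carrier)

/-- A family of modules forms a Hom-orthogonal set: the modules are nonzero,
pairwise non-isomorphic and pairwise Hom-orthogonal. -/
def HomOrthFamily {I : Type v} (X : I → FDMod k A) : Prop :=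
  (∀ i, Nontrivial (X i).carrier) ∧
  (∀ i j, i ≠ j → ¬(X i).Iso (X j)) ∧
  (∀ i j, i ≠ j → (X i).HomOrth (X j))

/-- `A` is brick-finite: there are only finitely many isomorphism classes of bricks. -/
def BrickFinite (k A : Type u) [Field k] [Ring A] [Algebra k A] : Prop :=
  ∃ (m : ℕ) (f : Fin m → FDMod k A), ∀ N : FDMod k A, N.IsBrick → ∃ i, N.Iso (f i)

/-- `A` has rank `n`: there are exactly `n` isomorphism classes of simple modules. -/
def HasRank (k A : Type u) [Field k] [Ring A] [Algebra k A] (n : ℕ) : Prop :=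
  ∃ S : Fin n → FDMod k A,
    (∀ i, IsSimpleModule A (S i).carrier) ∧
    (∀ i j, i ≠ j → ¬(S i).Iso (S j)) ∧
    (∀ T : FDMod k A, IsSimpleModule A T.carrier → ∃ i, T.Iso (S i))

/-- There are only finitely many isomorphism classes of bricks annihilated by the
two-sided ideal `J`; equivalently, the quotient algebra `A/J` is brick-finite
(modules over `A/J` are exactly the `A`-modules annihilated by `J`, and this
identification preserves endomorphism rings). -/
def BrickFiniteKilledBy (k A : Type u) [Field k] [Ring A] [Algebra k A]
    (J : TwoSidedIdeal A) : Prop :=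
  ∃ (m : ℕ) (f : Fin m → FDMod k A), ∀ N : FDMod k A, N.IsBrick →
    (∀ a ∈ J, ∀ x : N.carrier, a • x = 0) → ∃ i, N.Iso (f i)

/-- `A` is minimal brick-infinite: `A` is brick-infinite, but the quotient of `A`
by any nonzero two-sided ideal is brick-finite. -/
def MinimalBrickInfinite (k A : Type u) [Field k] [Ring A] [Algebra k A] : Prop :=
  ¬ BrickFinite k A ∧
  ∀ J : TwoSidedIdeal A, (∃ a ∈ J, a ≠ 0) → BrickFiniteKilledBy k A J

/-!
Let `X j` be the unfaithful bricks, `U` a nonprincipal ultrafilter on the index set and `J` the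
least two-sided ideal containing the annihilators of almost all `X j`. It is nonzero, so there are
only finitely many bricks, hence finitely many torsion classes, over `A / J`; therefore almost all
`X j` are not killed by `J`, and the torsion class `{Z over A / J | Hom(Z, X j) = 0}` is almost
always the same class `T`. Put `I j = ann (X j)`. Then `X j` lies in the heart of the interval of
torsion classes over `A / I j` which restrict to `T` over `A / J`. Nonzero modules of minimal
dimension in such hearts are bricks, and two of them are isomorphic or Hom-orthogonal, even for
different `I j`.

The minimal dimension is bounded independently of `j`: by finiteness `T` is functorially finite and
thus the silting class of a map `σ` of projective `A`-modules, and the smallest torsion class over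
`A / I j` containing `T` is missed either by the cokernel of `σ` on the first summand, or by a
quotient of `X j` cut out by a single linear functional on the maps from the source of `σ`. So
almost always the minimal module `Y j` has the same dimension `d`. If `Y i` were isomorphic to
almost all `Y j`, then `I j` would kill it for almost all `j`, hence so would `J`, which is
impossible. One can therefore select an infinite subfamily of pairwise non-isomorphic `Y j`.
-/

namespace FDMod

instance : CoeSort (FDMod k A) (Type u) := ⟨carrier⟩

instance finiteDimensional_submodule {M : Type*} [AddCommGroup M] [Module k M] [Module A M]
    [IsScalarTower k A M] [FiniteDimensional k M] (U : Submodule A M) : FiniteDimensional k U :=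
  inferInstanceAs (FiniteDimensional k (U.restrictScalars k))

/-- A submodule, as a bundled module. -/
abbrev sub (Z : FDMod k A) (U : Submodule A Z) : FDMod k A := ⟨U⟩

/-- A quotient module, as a bundled module. -/
abbrev quot (Z : FDMod k A) (U : Submodule A Z) : FDMod k A := ⟨Z ⧸ U⟩

theorem isNoetherian (Z : FDMod k A) : IsNoetherian A Z := isNoetherian_of_tower k inferInstance

variable {J : TwoSidedIdeal A} {Y Z : FDMod k A}

section finrank

theorem finrank_le_of_surjective (g : Z →ₗ[A] Y) (hg : Function.Surjective g) :
    finrank k Y ≤ finrank k Z :=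
  LinearMap.finrank_le_finrank_of_surjective (f := g.restrictScalars k) hg

theorem finrank_le_of_injective (g : Z →ₗ[A] Y) (hg : Function.Injective g) :
    finrank k Z ≤ finrank k Y :=
  LinearMap.finrank_le_finrank_of_injective (f := g.restrictScalars k) hg

theorem surjective_of_injective {g : Z →ₗ[A] Z} (hg : Function.Injective g) :
    Function.Surjective g :=
  LinearMap.surjective_of_injective (f := g.restrictScalars k) hg

theorem surjective_of_finrank_le {g : Z →ₗ[A] Y} (hg : Function.Injective g)
    (h : finrank k Y ≤ finrank k Z) : Function.Surjective g :=
  ((g.restrictScalars k).injective_iff_surjective_of_finrank_eq_finrank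
    ((finrank_le_of_injective g hg).antisymm h)).mp hg

theorem injective_of_finrank_le {g : Z →ₗ[A] Y} (hg : Function.Surjective g)
    (h : finrank k Z ≤ finrank k Y) : Function.Injective g :=
  ((g.restrictScalars k).injective_iff_surjective_of_finrank_eq_finrank
    (h.antisymm (finrank_le_of_surjective g hg))).mpr hg

theorem finrank_range_lt {g : Z →ₗ[A] Y} (hg : ¬ Function.Injective g) :
    finrank k g.range < finrank k Z := by
  by_contra! h
  refine hg fun x y hxy => injective_of_finrank_le (Y := Y.sub g.range)
    g.surjective_rangeRestrict h (Subtype.ext hxy)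

theorem finrank_quot_lt {U : Submodule A Z} (hU : U ≠ ⊥) :
    finrank k (Z ⧸ U) < finrank k Z := by
  by_contra! h
  have hinj := injective_of_finrank_le (Y := Z.quot U) U.mkQ_surjective h
  exact hU (by rw [← U.ker_mkQ, LinearMap.ker_eq_bot.mpr hinj])

end finrank

section KilledBy

/-- `Z` is annihilated by `J`, that is, `Z` is a module over `A / J`. -/
def KilledBy (J : TwoSidedIdeal A) (Z : FDMod k A) : Prop := ∀ a ∈ J, ∀ x : Z, a • x = 0

theorem KilledBy.of_surjective (hZ : Z.KilledBy J) (g : Z →ₗ[A] Y)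
    (hg : Function.Surjective g) : Y.KilledBy J := by
  intro a ha x
  obtain ⟨y, rfl⟩ := hg x
  rw [← map_smul, hZ a ha, map_zero]

theorem KilledBy.of_injective (hY : Y.KilledBy J) (g : Z →ₗ[A] Y)
    (hg : Function.Injective g) : Z.KilledBy J := fun a ha x => hg <| by
  rw [map_smul, hY a ha, map_zero]

theorem KilledBy.sub (hZ : Z.KilledBy J) (U : Submodule A Z) : (Z.sub U).KilledBy J :=
  hZ.of_injective U.subtype U.injective_subtype

theorem KilledBy.quot (hZ : Z.KilledBy J) (U : Submodule A Z) : (Z.quot U).KilledBy J :=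
  hZ.of_surjective U.mkQ U.mkQ_surjective

theorem KilledBy.prod (hY : Y.KilledBy J) (hZ : Z.KilledBy J) :
    (⟨Y × Z⟩ : FDMod k A).KilledBy J :=
  fun a ha x => Prod.ext (hY a ha x.1) (hZ a ha x.2)

theorem killedBy_quot_smul_top_sup (Z : FDMod k A) (U : Submodule A Z) :
    (Z.quot (U ⊔ J.asIdeal • ⊤)).KilledBy J := by
  intro a ha x
  obtain ⟨y, rfl⟩ := Submodule.mkQ_surjective _ x
  rw [← map_smul, ← LinearMap.mem_ker, Submodule.ker_mkQ]
  exact Submodule.mem_sup_right (Submodule.smul_mem_smul ha trivial)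

theorem KilledBy.smul_top_le_ker {M : Type*} [AddCommGroup M] [Module A M] (hZ : Z.KilledBy J)
    (g : M →ₗ[A] Z) : J.asIdeal • ⊤ ≤ g.ker :=
  Submodule.smul_le.mpr fun a ha x _ => by rw [LinearMap.mem_ker, map_smul, hZ a ha]

end KilledBy

section IsBrick

variable [IsAlgClosed k]

theorem isBrick_of_injective [Nontrivial Z]
    (h : ∀ g : Z →ₗ[A] Z, g ≠ 0 → Function.Injective g) : Z.IsBrick := by
  refine ⟨inferInstance, fun f => ?_⟩
  obtain ⟨c, hc⟩ := Module.End.exists_eigenvalue (f.restrictScalars k : Module.End k Z)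
  obtain ⟨x, hx⟩ := hc.exists_hasEigenvector
  have hfx : f x = c • x := hx.apply_eq_smul
  have hzero : f - c • LinearMap.id = 0 := by
    by_contra hne
    exact hx.2 (h _ hne (by simp [hfx]))
  exact ⟨c, fun y => sub_eq_zero.mp (LinearMap.congr_fun hzero y)⟩

theorem exists_endomorphism_of_not_isBrick [Nontrivial Z] (h : ¬ Z.IsBrick) :
    ∃ g : Z →ₗ[A] Z, g ≠ 0 ∧ ¬ Function.Injective g := by
  contrapose! h
  exact isBrick_of_injective h

end IsBrick

end FDMod

open FDMod

section TorsionClass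

/-- `T` is a torsion class of the category of modules over `A / J`. -/
structure IsTorsionClass (J : TwoSidedIdeal A) (T : Set (FDMod k A)) : Prop where
  killedBy : ∀ Z ∈ T, Z.KilledBy J
  of_subsingleton : ∀ Z : FDMod k A, Subsingleton Z → Z ∈ T
  of_surjective : ∀ {Z Y : FDMod k A} (g : Z →ₗ[A] Y), Function.Surjective g → Z ∈ T → Y ∈ T
  of_extension : ∀ {Z : FDMod k A} (U : Submodule A Z), Z.KilledBy J → Z.sub U ∈ T →
    Z.quot U ∈ T → Z ∈ T

/-- The modules that receive no nonzero map from `T`. -/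
def rightPerp (T : Set (FDMod k A)) : Set (FDMod k A) :=
  {Y | ∀ Z ∈ T, ∀ g : Z →ₗ[A] Y, g = 0}

/-- The modules over `A / J` that have no nonzero map to `F`. -/
def leftPerp (J : TwoSidedIdeal A) (F : Set (FDMod k A)) : Set (FDMod k A) :=
  {Z | Z.KilledBy J ∧ ∀ Y ∈ F, ∀ g : Z →ₗ[A] Y, g = 0}

variable {J : TwoSidedIdeal A} {T : Set (FDMod k A)} {Y Z : FDMod k A}

theorem sub_mem_rightPerp (hY : Y ∈ rightPerp T) (U : Submodule A Y) : Y.sub U ∈ rightPerp T :=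
  fun Z hZ g => by
    rw [← U.subtype.cancel_left U.injective_subtype, hY Z hZ (U.subtype ∘ₗ g),
      LinearMap.comp_zero]

theorem isTorsionClass_leftPerp (J : TwoSidedIdeal A) (F : Set (FDMod k A)) :
    IsTorsionClass J (leftPerp J F) where
  killedBy _ hZ := hZ.1
  of_subsingleton Z _ :=
    ⟨fun a _ x => Subsingleton.elim _ _, fun Y _ g => LinearMap.ext fun x => by
      rw [Subsingleton.elim x 0, map_zero, map_zero]⟩
  of_surjective g hg hZ :=
    ⟨hZ.1.of_surjective g hg, fun Y hY f =>
      (LinearMap.cancel_right hg).mp ((hZ.2 Y hY (f ∘ₗ g)).trans (LinearMap.zero_comp g).symm)⟩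
  of_extension {Z} U hZ hU hQ := ⟨hZ, fun Y hY f => by
    have hf : U ≤ f.ker := fun x hx => LinearMap.congr_fun (hU.2 Y hY (f ∘ₗ U.subtype)) ⟨x, hx⟩
    rw [← U.liftQ_mkQ f hf, hQ.2 Y hY (U.liftQ f hf), LinearMap.zero_comp]⟩

namespace IsTorsionClass

variable (hT : IsTorsionClass J T)
include hT

theorem of_equiv (e : Z ≃ₗ[A] Y) (hZ : Z ∈ T) : Y ∈ T :=
  hT.of_surjective e.toLinearMap e.surjective hZ

theorem of_ker_range (hZ : Z.KilledBy J) (g : Z →ₗ[A] Y) (hker : Z.sub g.ker ∈ T)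
    (hrange : Y.sub g.range ∈ T) : Z ∈ T :=
  hT.of_extension g.ker hZ hker (hT.of_equiv (Y := Z.quot g.ker) g.quotKerEquivRange.symm hrange)

theorem sub_comap_mkQ_mem {U : Submodule A Z} (hU : Z.sub U ∈ T) (hZ : Z.KilledBy J)
    {W : Submodule A (Z ⧸ U)} (hW : (Z.quot U).sub W ∈ T) : Z.sub (W.comap U.mkQ) ∈ T := by
  have hle : U ≤ W.comap U.mkQ := by
    simpa only [Submodule.ker_mkQ] using LinearMap.ker_le_comap U.mkQ (p := W)
  let g : W.comap U.mkQ →ₗ[A] Z ⧸ U := U.mkQ ∘ₗ (W.comap U.mkQ).subtype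
  have hrange : g.range = W := by
    rw [LinearMap.range_comp, Submodule.range_subtype,
      Submodule.map_comap_eq_of_surjective U.mkQ_surjective]
  have hker : g.ker = U.submoduleOf (W.comap U.mkQ) := by
    rw [LinearMap.ker_comp, Submodule.ker_mkQ]; rfl
  refine hT.of_ker_range (hZ.sub _) (Y := Z.quot U) g ?_ (by rwa [hrange])
  rw [hker]
  exact hT.of_equiv (Z := Z.sub U) (Submodule.submoduleOfEquivOfLe hle).symm hU

theorem exists_torsion_submodule (hZ : Z.KilledBy J) :
    ∃ U : Submodule A Z, Z.sub U ∈ T ∧ Z.quot U ∈ rightPerp T := by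
  have := Z.isNoetherian
  obtain ⟨U, hU, hmax⟩ := exists_maximal_of_wellFoundedGT (fun U => Z.sub U ∈ T)
    ⟨⊥, hT.of_subsingleton _ inferInstance⟩
  refine ⟨U, hU, fun N hN g => ?_⟩
  have hle : g.range.comap U.mkQ ≤ U := hmax
    (hT.sub_comap_mkQ_mem hU hZ (hT.of_surjective g.rangeRestrict g.surjective_rangeRestrict hN))
    (by simpa only [Submodule.ker_mkQ] using LinearMap.ker_le_comap U.mkQ (p := g.range))
  rw [← LinearMap.range_eq_bot, eq_bot_iff, ← Submodule.map_comap_eq_of_surjective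
    U.mkQ_surjective g.range, Submodule.map_le_iff_le_comap, Submodule.comap_bot, U.ker_mkQ]
  exact hle

theorem leftPerp_rightPerp : leftPerp J (rightPerp T) = T := by
  refine Set.Subset.antisymm (fun Z hZ => ?_) fun Z hZ => ⟨hT.killedBy Z hZ, fun Y hY => hY Z hZ⟩
  obtain ⟨U, hU, hQ⟩ := hT.exists_torsion_submodule hZ.1
  have htop : U = ⊤ := by rw [← U.ker_mkQ, hZ.2 _ hQ U.mkQ, LinearMap.ker_zero]
  exact hT.of_surjective (Z := Z.sub U) U.subtype (by
    rw [← LinearMap.range_eq_top, U.range_subtype, htop]) hU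

theorem mem_of_forall_eq_zero (hZ : Z.KilledBy J)
    (h : ∀ Y ∈ rightPerp T, ∀ g : Z →ₗ[A] Y, g = 0) : Z ∈ T :=
  hT.leftPerp_rightPerp ▸ ⟨hZ, h⟩

theorem prod_mem (hY : Y ∈ T) (hZ : Z ∈ T) : (⟨Y × Z⟩ : FDMod k A) ∈ T :=
  hT.mem_of_forall_eq_zero ((hT.killedBy Y hY).prod (hT.killedBy Z hZ)) fun _ hX _ =>
    LinearMap.prod_ext ((hX Y hY _).trans (LinearMap.zero_comp _).symm)
      ((hX Z hZ _).trans (LinearMap.zero_comp _).symm)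

theorem pi_mem {ι : Type} [Finite ι] (hZ : Z ∈ T) : (⟨ι → Z⟩ : FDMod k A) ∈ T := by
  classical
  exact hT.mem_of_forall_eq_zero (fun a ha x => funext fun i => hT.killedBy Z hZ a ha (x i))
    fun Y hY g => LinearMap.pi_ext' fun i => (hY Z hZ _).trans (LinearMap.zero_comp _).symm

/-- Any module which is not a brick is an extension of the cokernel by the image of an
endomorphism, both of smaller dimension. -/
theorem subset_of_isBrick [IsAlgClosed k] {T' : Set (FDMod k A)} (hT' : IsTorsionClass J T')
    (h : ∀ Z ∈ T, Z.IsBrick → Z ∈ T') : T ⊆ T' := by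
  intro Z hZ
  induction hn : finrank k Z using Nat.strong_induction_on generalizing Z with
  | _ n ih =>
    subst hn
    rcases subsingleton_or_nontrivial Z with hs | hs
    · exact hT'.of_subsingleton Z hs
    by_cases hb : Z.IsBrick
    · exact h Z hZ hb
    obtain ⟨g, hg, hinj⟩ := exists_endomorphism_of_not_isBrick hb
    refine hT'.of_extension g.range (hT.killedBy Z hZ) ?_ ?_
    · exact ih _ (finrank_range_lt hinj) (Z := Z.sub g.range)
        (hT.of_surjective g.rangeRestrict g.surjective_rangeRestrict hZ) rfl
    · exact ih _ (finrank_quot_lt (LinearMap.range_eq_bot.not.mpr hg)) (Z := Z.quot g.range)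
        (hT.of_surjective g.range.mkQ g.range.mkQ_surjective hZ) rfl

end IsTorsionClass

theorem BrickFiniteKilledBy.finite_isTorsionClass [IsAlgClosed k]
    (hJ : BrickFiniteKilledBy k A J) : {T : Set (FDMod k A) | IsTorsionClass J T}.Finite := by
  obtain ⟨m, f, hf⟩ := hJ
  refine Set.Finite.of_finite_image (f := fun T => {i | f i ∈ T}) (Set.toFinite _) ?_
  have subset {T T' : Set (FDMod k A)} (hT : IsTorsionClass J T) (hT' : IsTorsionClass J T')
      (heq : {i | f i ∈ T} = {i | f i ∈ T'}) : T ⊆ T' :=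
    hT.subset_of_isBrick hT' fun Z hZ hb => by
      obtain ⟨i, ⟨e⟩⟩ := hf Z hb (hT.killedBy Z hZ)
      have hi : i ∈ {i | f i ∈ T'} := heq ▸ hT.of_equiv e hZ
      exact hT'.of_equiv e.symm hi
  exact fun T hT T' hT' heq => (subset hT hT' heq).antisymm (subset hT' hT heq.symm)

end TorsionClass

section LeftApproximation

/-- The map `A → M` sending `1` to `m` is a left `T`-approximation of the regular module. -/
structure IsLeftApprox (T : Set (FDMod k A)) (M : FDMod k A) (m : M) : Prop where
  mem : M ∈ T
  exists_apply_eq : ∀ Z ∈ T, ∀ z : Z, ∃ h : M →ₗ[A] Z, h m = z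

/-- A left `T`-approximation of the regular module which is left minimal. -/
structure IsMinimalLeftApprox (T : Set (FDMod k A)) (M : FDMod k A) (m : M) : Prop
    extends IsLeftApprox T M m where
  bijective : ∀ u : M →ₗ[A] M, u m = m → Function.Bijective u

/-- The regular module has a left `T`-approximation; for torsion classes this is functorial
finiteness. -/
def HasLeftApprox (T : Set (FDMod k A)) : Prop := ∃ (M : FDMod k A) (m : M), IsLeftApprox T M m

variable {J : TwoSidedIdeal A} {T : Set (FDMod k A)} {M Z : FDMod k A} {m : M}

theorem HasLeftApprox.exists_isMinimalLeftApprox (hT : IsTorsionClass J T)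
    (h : HasLeftApprox T) : ∃ (M : FDMod k A) (m : M), IsMinimalLeftApprox T M m := by
  obtain ⟨M₀, m₀, h₀⟩ := h
  obtain ⟨⟨M, m⟩, hM, hmin⟩ := exists_minimalFor_of_wellFoundedLT
    (fun p : Σ M : FDMod k A, M => IsLeftApprox T p.1 p.2) (fun p => finrank k p.1) ⟨⟨M₀, m₀⟩, h₀⟩
  refine ⟨M, m, hM, fun u hu => ?_⟩
  suffices hinj : Function.Injective u from ⟨hinj, surjective_of_injective hinj⟩
  by_contra hinj
  refine (finrank_range_lt hinj).not_ge (hmin (j := ⟨M.sub u.range, m, m, hu⟩) ⟨?_, ?_⟩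
    (finrank_range_lt hinj).le)
  · exact hT.of_surjective u.rangeRestrict u.surjective_rangeRestrict hM.mem
  · intro Z hZ z
    obtain ⟨h, rfl⟩ := hM.exists_apply_eq Z hZ z
    exact ⟨h ∘ₗ u.range.subtype, rfl⟩

/-- The coordinate vector of a basis of a generator `M` is an approximation in a power of `M`. -/
theorem IsTorsionClass.hasLeftApprox_of_generator (hT : IsTorsionClass J T) (hM : M ∈ T)
    (hgen : ∀ Z ∈ T, ⨆ g : M →ₗ[A] Z, g.range = ⊤) : HasLeftApprox T := by
  let b := Module.finBasis k M
  refine ⟨⟨Fin (finrank k M) → M⟩, b, hT.pi_mem hM, fun Z hZ z => ?_⟩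
  have hz : z ∈ ⨆ g : M →ₗ[A] Z, g.range := hgen Z hZ ▸ Submodule.mem_top
  induction hz using Submodule.iSup_induction' with
  | mem g x hx =>
    obtain ⟨y, rfl⟩ := hx
    refine ⟨∑ i, b.repr y i • (g ∘ₗ LinearMap.proj i), ?_⟩
    conv_rhs => rw [← b.sum_repr y, map_sum]
    simp only [LinearMap.sum_apply, LinearMap.smul_apply, LinearMap.comp_apply,
      LinearMap.proj_apply, LinearMap.map_smul_of_tower]
  | zero => exact ⟨0, rfl⟩
  | add x y _ _ hx hy =>
    obtain ⟨g, rfl⟩ := hx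
    obtain ⟨h, rfl⟩ := hy
    exact ⟨g + h, rfl⟩

namespace IsMinimalLeftApprox

variable (hM : IsMinimalLeftApprox T M m) (hT : IsTorsionClass J T)
include hM hT

/-- Wakamatsu's lemma: `M` is Ext-projective in `T`. -/
theorem exists_section {E : FDMod k A} (hE : E.KilledBy J) (p : E →ₗ[A] M)
    (hp : Function.Surjective p) (hker : E.sub p.ker ∈ T) :
    ∃ s : M →ₗ[A] E, p ∘ₗ s = LinearMap.id := by
  have hET : E ∈ T := hT.of_ker_range hE p hker
    (hT.of_equiv (Y := M.sub p.range) (LinearEquiv.ofTop _ (LinearMap.range_eq_top.mpr hp)).symm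
      hM.mem)
  obtain ⟨e, he⟩ := hp m
  obtain ⟨h, hh⟩ := hM.exists_apply_eq E hET e
  let φ := LinearEquiv.ofBijective (p ∘ₗ h) (hM.bijective _ (by rw [LinearMap.comp_apply, hh, he]))
  exact ⟨h ∘ₗ φ.symm, LinearMap.ext fun x => φ.apply_symm_apply x⟩

/-- The extension is pulled back along `g`, where it splits. -/
theorem exists_lift (hZ : Z.KilledBy J) {U : Submodule A Z} (hU : Z.sub U ∈ T)
    (g : M →ₗ[A] Z ⧸ U) : ∃ l : M →ₗ[A] Z, U.mkQ ∘ₗ l = g := by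
  let E : Submodule A (M × Z) :=
    LinearMap.eqLocus (g ∘ₗ LinearMap.fst A M Z) (U.mkQ ∘ₗ LinearMap.snd A M Z)
  let p : E →ₗ[A] M := LinearMap.fst A M Z ∘ₗ E.subtype
  have hp : Function.Surjective p := fun x => by
    obtain ⟨z, hz⟩ := U.mkQ_surjective (g x)
    exact ⟨⟨(x, z), hz.symm⟩, rfl⟩
  let i : U →ₗ[A] E := (LinearMap.inr A M Z ∘ₗ U.subtype).codRestrict E fun x => by
    change g 0 = U.mkQ x
    rw [map_zero, eq_comm, ← LinearMap.mem_ker, U.ker_mkQ]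
    exact x.2
  let j : U →ₗ[A] p.ker := i.codRestrict p.ker fun _ => rfl
  have hj : Function.Surjective j := by
    rintro ⟨⟨⟨x, z⟩, hxz⟩, hx : x = 0⟩
    subst hx
    have hz : z ∈ U := by
      rw [← U.ker_mkQ]
      exact hxz.symm.trans (map_zero g)
    exact ⟨⟨z, hz⟩, rfl⟩
  obtain ⟨s, hs⟩ := hM.exists_section hT (E := ⟨E⟩)
    (((hT.killedBy M hM.mem).prod hZ).sub (Z := ⟨M × Z⟩) E) p hp
    (hT.of_surjective (Z := Z.sub U) (Y := ⟨p.ker⟩) j hj hU)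
  refine ⟨LinearMap.snd A M Z ∘ₗ E.subtype ∘ₗ s, LinearMap.ext fun x => ?_⟩
  exact (s x).2.symm.trans (congrArg g (LinearMap.congr_fun hs x))

/-- A lift on `M` is corrected by a map to `U` so that it kills `m`. -/
theorem exists_lift_quot_span (hZ : Z.KilledBy J) {U : Submodule A Z} (hU : Z.sub U ∈ T)
    (g : M ⧸ A ∙ m →ₗ[A] Z ⧸ U) : ∃ l : M ⧸ A ∙ m →ₗ[A] Z, U.mkQ ∘ₗ l = g := by
  obtain ⟨l, hl⟩ := hM.exists_lift hT hZ hU (g ∘ₗ (A ∙ m).mkQ)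
  have hlm : l m ∈ U := by
    rw [← U.ker_mkQ, LinearMap.mem_ker]
    refine (LinearMap.congr_fun hl m).trans ?_
    rw [LinearMap.comp_apply, LinearMap.mem_ker.mp ((A ∙ m).ker_mkQ.ge
      (Submodule.mem_span_singleton_self m)), map_zero]
  obtain ⟨u, hu⟩ := hM.exists_apply_eq (Z.sub U) hU ⟨l m, hlm⟩
  have hspan : A ∙ m ≤ (l - U.subtype ∘ₗ u).ker := by
    rw [Submodule.span_singleton_le_iff_mem, LinearMap.mem_ker, LinearMap.sub_apply,
      LinearMap.comp_apply, hu, U.subtype_apply, sub_self]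
  refine ⟨(A ∙ m).liftQ _ hspan, (LinearMap.cancel_right (A ∙ m).mkQ_surjective).mp ?_⟩
  rw [LinearMap.comp_assoc, Submodule.liftQ_mkQ, LinearMap.comp_sub, hl, ← LinearMap.comp_assoc,
    show U.mkQ ∘ₗ U.subtype = 0 from LinearMap.ext fun x => by simp, LinearMap.zero_comp, sub_zero]

/-- The extension is pushed out along `g`, where it splits. -/
theorem exists_extend {X : FDMod k A} (hX : X.KilledBy J) (hZ : Z ∈ T) (p : X →ₗ[A] M)
    (hp : Function.Surjective p) (g : p.ker →ₗ[A] Z) :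
    ∃ l : X →ₗ[A] Z, l ∘ₗ p.ker.subtype = g := by
  let R : Submodule A (Z × X) := (g.prod (-p.ker.subtype)).range
  have hR (x : p.ker) : R.mkQ (g x, 0) = R.mkQ (0, x.1) :=
    (Submodule.Quotient.eq R).mpr ⟨x, by simp⟩
  have hRp : R ≤ (p ∘ₗ LinearMap.snd A Z X).ker := by
    rintro _ ⟨x, rfl⟩
    simp
  let ι : Z →ₗ[A] (Z × X) ⧸ R := R.mkQ ∘ₗ LinearMap.inl A Z X
  let π : (Z × X) ⧸ R →ₗ[A] M := R.liftQ (p ∘ₗ LinearMap.snd A Z X) hRp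
  have hπ : Function.Surjective π := fun y => by
    obtain ⟨x, rfl⟩ := hp y
    exact ⟨R.mkQ (0, x), rfl⟩
  have hexact : Function.Exact ι π := fun e => by
    constructor
    · intro he
      obtain ⟨⟨z, x⟩, rfl⟩ := R.mkQ_surjective e
      refine ⟨z + g ⟨x, he⟩, ?_⟩
      change R.mkQ (z + g ⟨x, he⟩, 0) = R.mkQ (z, x)
      rw [← add_zero (0 : X), ← Prod.mk_add_mk, map_add, hR, ← map_add, Prod.mk_add_mk, add_zero,
        zero_add]
    · rintro ⟨z, rfl⟩
      exact map_zero p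
  have hι : Function.Injective ι := by
    rw [injective_iff_map_eq_zero]
    intro z hz
    obtain ⟨x, hx⟩ := (Submodule.Quotient.mk_eq_zero R).mp hz
    have hx0 : x = 0 := Subtype.ext (neg_eq_zero.mp (congrArg Prod.snd hx))
    have hz : g x = z := congrArg Prod.fst hx
    rw [← hz, hx0, map_zero]
  obtain ⟨s, hs⟩ := hM.exists_section hT (E := ⟨(Z × X) ⧸ R⟩)
    (((hT.killedBy Z hZ).prod hX).quot (Z := ⟨Z × X⟩) R) π hπ
    (hT.of_equiv (Z := Z) (Y := ⟨π.ker⟩) ((LinearEquiv.ofInjective ι hι).trans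
      (LinearEquiv.ofEq _ _ hexact.linearMap_ker_eq.symm)) hZ)
  have hsplit := hexact.split_tfae'.out 0 1
  obtain ⟨-, r, hr⟩ := hsplit.mp ⟨hι, s, hs⟩
  refine ⟨r ∘ₗ R.mkQ ∘ₗ LinearMap.inr A Z X, LinearMap.ext fun x => ?_⟩
  exact (congrArg r (hR x).symm).trans (LinearMap.congr_fun hr (g x))

end IsMinimalLeftApprox

/-- `P` is an Ext-projective generator of `T`. The last condition says that the kernel of a map
in `T` which is a right `P`-approximation lies in `T` again. -/
structure IsExtProgenerator (J : TwoSidedIdeal A) (T : Set (FDMod k A)) (P : FDMod k A) :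
    Prop where
  mem : P ∈ T
  iSup_range : ∀ Z ∈ T, ⨆ g : P →ₗ[A] Z, g.range = ⊤
  exists_lift : ∀ {Z : FDMod k A}, Z.KilledBy J → ∀ {U : Submodule A Z}, Z.sub U ∈ T →
    ∀ g : P →ₗ[A] Z ⧸ U, ∃ l : P →ₗ[A] Z, U.mkQ ∘ₗ l = g
  ker_mem : ∀ {W Z : FDMod k A} (Φ : W →ₗ[A] Z), W ∈ T →
    (∀ g : P →ₗ[A] Z, ∃ l : P →ₗ[A] W, Φ ∘ₗ l = g) → W.sub Φ.ker ∈ T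

/-- A map `M → W` hitting a given element of `ker Φ` is corrected by a map factoring through
`M / A m` so that it lands in `ker Φ`. -/
theorem IsMinimalLeftApprox.ker_mem (hM : IsMinimalLeftApprox T M m) (hT : IsTorsionClass J T)
    {W Z : FDMod k A} (Φ : W →ₗ[A] Z) (hW : W ∈ T)
    (hΦ : ∀ g : M ⧸ A ∙ m →ₗ[A] Z, ∃ l : M ⧸ A ∙ m →ₗ[A] W, Φ ∘ₗ l = g) :
    W.sub Φ.ker ∈ T := by
  refine hT.mem_of_forall_eq_zero ((hT.killedBy W hW).sub _) fun Y hY f => LinearMap.ext fun x => ?_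
  obtain ⟨h, hh⟩ := hM.exists_apply_eq W hW x
  have hspan : A ∙ m ≤ (Φ ∘ₗ h).ker := by
    rw [Submodule.span_singleton_le_iff_mem, LinearMap.mem_ker, LinearMap.comp_apply, hh]
    exact x.2
  obtain ⟨l, hl⟩ := hΦ ((A ∙ m).liftQ _ hspan)
  let d : M →ₗ[A] W := h - l ∘ₗ (A ∙ m).mkQ
  have hd (y : M) : d y ∈ Φ.ker := by
    have hly : Φ (l ((A ∙ m).mkQ y)) = Φ (h y) := LinearMap.congr_fun hl ((A ∙ m).mkQ y)
    rw [LinearMap.mem_ker, LinearMap.sub_apply, map_sub, LinearMap.comp_apply, hly, sub_self]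
  have hdm : d.codRestrict Φ.ker hd m = x := Subtype.ext <| by
    have hm : (A ∙ m).mkQ m = 0 := (Submodule.Quotient.mk_eq_zero _).mpr
      (Submodule.mem_span_singleton_self m)
    change h m - l ((A ∙ m).mkQ m) = x
    rw [hm, map_zero, sub_zero, hh]
  rw [← hdm]
  exact LinearMap.congr_fun (hY M hM.mem (f ∘ₗ d.codRestrict Φ.ker hd)) m

theorem HasLeftApprox.exists_isExtProgenerator (hT : IsTorsionClass J T) (h : HasLeftApprox T) :
    ∃ P, IsExtProgenerator J T P := by
  obtain ⟨M, m, hM⟩ := h.exists_isMinimalLeftApprox hT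
  refine ⟨⟨M × (M ⧸ A ∙ m)⟩, ?_, fun Z hZ => ?_, fun hZ U hU g => ?_, fun Φ hW hΦ => ?_⟩
  · exact hT.prod_mem hM.mem (Z := M.quot (A ∙ m))
      (hT.of_surjective (A ∙ m).mkQ (A ∙ m).mkQ_surjective hM.mem)
  · refine eq_top_iff.mpr fun z _ => ?_
    obtain ⟨h, rfl⟩ := hM.exists_apply_eq Z hZ z
    exact Submodule.mem_iSup_of_mem (h ∘ₗ LinearMap.fst A M _) ⟨(m, 0), rfl⟩
  · obtain ⟨l₁, h₁⟩ := hM.exists_lift hT hZ hU (g ∘ₗ LinearMap.inl A _ _)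
    obtain ⟨l₂, h₂⟩ := hM.exists_lift_quot_span hT hZ hU (g ∘ₗ LinearMap.inr A _ _)
    exact ⟨l₁.coprod l₂, LinearMap.prod_ext
      (by rw [LinearMap.comp_assoc, LinearMap.coprod_inl, h₁])
      (by rw [LinearMap.comp_assoc, LinearMap.coprod_inr, h₂])⟩
  · refine hM.ker_mem hT Φ hW fun g => ?_
    obtain ⟨l, hl⟩ := hΦ (g ∘ₗ LinearMap.snd A _ _)
    refine ⟨l ∘ₗ LinearMap.inr A _ _, ?_⟩
    rw [← LinearMap.comp_assoc, hl, LinearMap.comp_assoc, LinearMap.snd_comp_inr,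
      LinearMap.comp_id]

end LeftApproximation

section Semisimple

variable {R S Y : Type*} [Ring R] [IsArtinianRing R] [AddCommGroup S] [Module R S]
  [AddCommGroup Y] [Module R Y]

theorem exists_finset_forall_smul_eq_zero_imp_mem_annihilator (R S : Type*) [Ring R]
    [IsArtinianRing R] [AddCommGroup S] [Module R S] :
    ∃ t : Finset S, ∀ r : R, (∀ s ∈ t, r • s = 0) → r ∈ Module.annihilator R S := by
  obtain ⟨t, ht⟩ := Finset.exists_inf_le fun s : S => (LinearMap.toSpanSingleton R S s).ker
  refine ⟨t, fun r hr => Module.mem_annihilator.mpr fun s => ht s ?_⟩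
  exact (Submodule.mem_finsetInf).mpr hr

/-- Modulo the annihilator of `S` the ring embeds into a power of `S`, so that `S` is the only
simple module over the quotient ring. -/
theorem exists_linearMap_ne_zero_of_annihilator_smul_ne_top [IsSimpleModule R S]
    [Module.Finite R Y] (h : Module.annihilator R S • (⊤ : Submodule R Y) ≠ ⊤) :
    ∃ f : Y →ₗ[R] S, f ≠ 0 := by
  classical
  obtain ⟨t, ht⟩ := exists_finset_forall_smul_eq_zero_imp_mem_annihilator R S
  obtain ⟨N, hN, hle⟩ := (eq_top_or_exists_le_coatom _).resolve_left h
  have : IsSimpleModule R (Y ⧸ N) := isSimpleModule_iff_isCoatom.mpr hN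
  have := IsSimpleModule.nontrivial R (Y ⧸ N)
  obtain ⟨y, hy⟩ := exists_ne (0 : Y ⧸ N)
  let ψ : R →ₗ[R] t → S := LinearMap.pi fun s => LinearMap.toSpanSingleton R S s
  let θ : R →ₗ[R] Y ⧸ N := LinearMap.toSpanSingleton R (Y ⧸ N) y
  have hψθ : ψ.ker ≤ θ.ker := fun r hr => by
    obtain ⟨x, rfl⟩ := N.mkQ_surjective y
    have hr : r ∈ Module.annihilator R S := ht r fun s hs => congrFun hr ⟨s, hs⟩
    exact (Submodule.Quotient.mk_eq_zero N).mpr (hle (Submodule.smul_mem_smul hr trivial))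
  obtain ⟨h, hh⟩ := IsSemisimpleModule.extension_property (ψ.ker.liftQ ψ le_rfl)
    (LinearMap.ker_eq_bot.mp (ψ.ker.ker_liftQ_eq_bot ψ le_rfl le_rfl)) (ψ.ker.liftQ θ hψθ)
  obtain ⟨s, hs⟩ : ∃ s, h ∘ₗ LinearMap.single R (fun _ : t => S) s ≠ 0 := by
    by_contra! hzero
    have hh0 : h = 0 := LinearMap.pi_ext' fun s => (hzero s).trans (LinearMap.zero_comp _).symm
    refine hy ?_
    have := LinearMap.congr_fun hh (Submodule.Quotient.mk 1)
    simpa [hh0, θ, eq_comm] using this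
  let e := LinearEquiv.ofBijective _ (LinearMap.bijective_of_ne_zero hs)
  refine ⟨e.symm ∘ₗ N.mkQ, fun h0 => hy ?_⟩
  obtain ⟨x, rfl⟩ := N.mkQ_surjective y
  exact e.symm.injective ((LinearMap.congr_fun h0 x).trans e.symm.map_zero.symm)

theorem exists_pow_succ_mul_self (I : Ideal R) : ∃ n, I ^ (n + 1) * I ^ (n + 1) = I ^ (n + 1) := by
  obtain ⟨n, hn⟩ := IsArtinian.monotone_stabilizes
    ⟨fun n => OrderDual.toDual (I ^ n), fun _ _ h => Ideal.pow_le_pow_right h⟩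
  refine ⟨n, ?_⟩
  rw [← Submodule.pow_add _ n.succ_ne_zero]
  exact (hn (n + 1 + (n + 1)) (by lia)).symm.trans (hn (n + 1) (by lia))

end Semisimple

namespace FDMod

variable (P : FDMod k A)

/-- The opposite endomorphism ring of `P`, which acts on `Hom(P, Z)` by precomposition. -/
abbrev EndOp (P : FDMod k A) := (Module.End A P)ᵐᵒᵖ

section Action

variable (N : Type*) [AddCommGroup N] [Module A N]

instance moduleEndOp : Module P.EndOp (P →ₗ[A] N) where
  smul r f := f ∘ₗ r.unop
  one_smul f := f.comp_id
  mul_smul r s f := (LinearMap.comp_assoc r.unop s.unop f).symm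
  smul_zero r := r.unop.zero_comp
  smul_add r f g := LinearMap.add_comp r.unop g f
  add_smul r s f := LinearMap.comp_add r.unop s.unop f
  zero_smul f := f.comp_zero

variable {P N} in
theorem endOp_smul (r : P.EndOp) (f : P →ₗ[A] N) : r • f = f ∘ₗ r.unop := rfl

variable [Module k N] [IsScalarTower k A N]

instance isScalarTower_endOp : IsScalarTower k P.EndOp (P →ₗ[A] N) :=
  ⟨fun c r f => LinearMap.ext fun x => f.map_smul_of_tower c (r.unop x)⟩

instance finite_endOp_hom [FiniteDimensional k N] : Module.Finite P.EndOp (P →ₗ[A] N) :=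
  .of_restrictScalars_finite k _ _

end Action

instance isArtinianRing_endOp : IsArtinianRing P.EndOp := .of_finite k _

end FDMod

section Reduction

variable {J : TwoSidedIdeal A} {T : Set (FDMod k A)} {P Y Z : FDMod k A}

theorem IsTorsionClass.mem_of_iSup_range (hT : IsTorsionClass J T) (hP : P ∈ T)
    (hZ : Z.KilledBy J) (h : ⨆ g : P →ₗ[A] Z, g.range = ⊤) : Z ∈ T :=
  hT.mem_of_forall_eq_zero hZ fun Y hY f => by
    rw [← LinearMap.ker_eq_top, eq_top_iff, ← h, iSup_le_iff]
    exact fun g => LinearMap.range_le_ker_iff.mpr (hY P hP (f ∘ₗ g))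

/-- A finite generating family of `Hom(P, Z)` gives `Φ : P ^ n → Z`; the map `Ψ : P ^ n → Y` with
components the images under `ω` kills `ker Φ`, which is again generated by `P`. -/
theorem IsExtProgenerator.exists_eq_comp (hP : IsExtProgenerator J T P) (hT : IsTorsionClass J T)
    (hZ : Z ∈ T) (ω : (P →ₗ[A] Z) →ₗ[P.EndOp] (P →ₗ[A] Y)) :
    ∃ g : Z →ₗ[A] Y, ∀ φ : P →ₗ[A] Z, ω φ = g ∘ₗ φ := by
  obtain ⟨n, φ, hφ⟩ := (finite_endOp_hom P Z).exists_fin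
  let Φ : (Fin n → P) →ₗ[A] Z := LinearMap.lsum A (fun _ => P) ℕ φ
  let Ψ : (Fin n → P) →ₗ[A] Y := LinearMap.lsum A (fun _ => P) ℕ fun i => ω (φ i)
  have hcomp (l : P →ₗ[A] (Fin n → P)) : ω (Φ ∘ₗ l) = Ψ ∘ₗ l := by
    have hsum : Φ ∘ₗ l = ∑ i, MulOpposite.op (LinearMap.proj i ∘ₗ l) • φ i := by
      ext x; simp [Φ, endOp_smul]
    simp only [hsum, map_sum, map_smul]
    ext x; simp [Ψ, endOp_smul]
  have hlift (g : P →ₗ[A] Z) : ∃ l : P →ₗ[A] (Fin n → P), Φ ∘ₗ l = g := by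
    have hg : g ∈ Submodule.span P.EndOp (Set.range φ) := hφ ▸ Submodule.mem_top
    obtain ⟨c, rfl⟩ := (Submodule.mem_span_range_iff_exists_fun P.EndOp).mp hg
    refine ⟨LinearMap.pi fun i => (c i).unop, ?_⟩
    ext x; simp [Φ, endOp_smul]
  have hΦ : Function.Surjective Φ := by
    rw [← LinearMap.range_eq_top, eq_top_iff, ← hP.iSup_range Z hZ, iSup_le_iff]
    intro g
    obtain ⟨l, rfl⟩ := hlift g
    exact LinearMap.range_comp_le_range l Φ
  have hker : Φ.ker ≤ Ψ.ker := by
    have hgen := hP.iSup_range _ (hP.ker_mem (W := ⟨Fin n → P⟩) Φ (hT.pi_mem hP.mem) hlift)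
    rw [← Φ.ker.range_subtype, ← Submodule.map_top, ← hgen, Submodule.map_iSup, iSup_le_iff]
    intro g
    rw [← LinearMap.range_comp, LinearMap.range_le_ker_iff, ← hcomp, ← LinearMap.comp_assoc,
      LinearMap.comp_ker_subtype, LinearMap.zero_comp, map_zero]
  let e := Φ.quotKerEquivOfSurjective hΦ
  refine ⟨Φ.ker.liftQ Ψ hker ∘ₗ e.symm, fun f => ?_⟩
  obtain ⟨l, rfl⟩ := hlift f
  rw [hcomp]
  ext x
  have hx : e.symm (Φ (l x)) = Φ.ker.mkQ (l x) := e.symm_apply_eq.mpr rfl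
  simp [hx]

/-- The modules in `T` generated by `G`, for a submodule `G` of an Ext-projective
generator `P` of `T`. -/
def traceClass (T : Set (FDMod k A)) (G : Submodule A P) : Set (FDMod k A) :=
  {Z ∈ T | ⨆ g : P →ₗ[A] Z, G.map g = ⊤}

theorem IsExtProgenerator.isTorsionClass_traceClass (hP : IsExtProgenerator J T P)
    (hT : IsTorsionClass J T) (G : Submodule A P) : IsTorsionClass J (traceClass T G) where
  killedBy Z hZ := hT.killedBy Z hZ.1
  of_subsingleton Z _ := ⟨hT.of_subsingleton Z ‹_›, Subsingleton.elim _ _⟩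
  of_surjective {Z Y} g hg hZ := ⟨hT.of_surjective g hg hZ.1, by
    rw [eq_top_iff, ← LinearMap.range_eq_top.mpr hg, LinearMap.range_eq_map, ← hZ.2,
      Submodule.map_iSup]
    exact iSup_le fun f => (Submodule.map_comp f g G).symm.trans_le
      (le_iSup (fun f : P →ₗ[A] Y => G.map f) (g ∘ₗ f))⟩
  of_extension {Z} U hZ hU hQ := ⟨hT.of_extension U hZ hU.1 hQ.1, by
    set V := ⨆ g : P →ₗ[A] Z, G.map g
    have hUV : U ≤ V := by
      rw [← U.range_subtype, LinearMap.range_eq_map, ← hU.2, Submodule.map_iSup]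
      exact iSup_le fun f => (Submodule.map_comp f U.subtype G).symm.trans_le
        (le_iSup (fun f : P →ₗ[A] Z => G.map f) (U.subtype ∘ₗ f))
    have hmap : V.map U.mkQ = ⊤ := by
      rw [eq_top_iff, ← hQ.2, iSup_le_iff]
      intro g
      obtain ⟨l, rfl⟩ := hP.exists_lift hZ hU.1 g
      rw [Submodule.map_comp]
      exact Submodule.map_mono (le_iSup (fun f : P →ₗ[A] Z => G.map f) l)
    rw [← sup_eq_right.mpr hUV, ← Submodule.comap_map_mkQ, hmap, Submodule.comap_top]⟩

theorem IsExtProgenerator.hasLeftApprox_traceClass (hP : IsExtProgenerator J T P)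
    (hT : IsTorsionClass J T) {G : Submodule A P} (hG : P.sub G ∈ traceClass T G) :
    HasLeftApprox (traceClass T G) := by
  refine (hP.isTorsionClass_traceClass hT G).hasLeftApprox_of_generator hG fun Z hZ => ?_
  rw [eq_top_iff, ← hZ.2, iSup_le_iff]
  intro g
  have hrange : (g ∘ₗ G.subtype).range = G.map g := by rw [LinearMap.range_comp, G.range_subtype]
  exact hrange.ge.trans (le_iSup (fun f : G →ₗ[A] Z => f.range) (g ∘ₗ G.subtype))

/-- The trace of an ideal of endomorphisms of `P`. -/
def idealTrace (I : Ideal P.EndOp) : Submodule A P := ⨆ β ∈ I, β.unop.range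

theorem range_le_idealTrace {I : Ideal P.EndOp} {β : P.EndOp} (hβ : β ∈ I) :
    β.unop.range ≤ idealTrace I :=
  le_iSup₂ (f := fun (β : P.EndOp) (_ : β ∈ I) => β.unop.range) β hβ

theorem IsExtProgenerator.sub_idealTrace_mem (hP : IsExtProgenerator J T P)
    (hT : IsTorsionClass J T) {I : Ideal P.EndOp} (hI : I * I = I) :
    P.sub (idealTrace I) ∈ traceClass T (idealTrace I) := by
  set G := idealTrace I
  have hle : G ≤ (⨆ g : P →ₗ[A] G, G.map g).map G.subtype := by
    refine iSup₂_le fun β hβ => ?_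
    rw [← hI] at hβ
    induction hβ using Submodule.mul_induction_on' with
    | mem_mul_mem r hr s hs =>
      have hsr : (r * s).unop.range =
          (r.unop.range.map (s.unop.codRestrict G fun x =>
            range_le_idealTrace hs ⟨x, rfl⟩)).map G.subtype := by
        rw [← LinearMap.range_comp, ← LinearMap.range_comp]
        rfl
      rw [hsr]
      exact Submodule.map_mono ((Submodule.map_mono (range_le_idealTrace hr)).trans
        (le_iSup (fun g : P →ₗ[A] G => G.map g) _))
    | add x _ y _ hx hy =>
      rintro _ ⟨z, rfl⟩
      exact add_mem (hx ⟨z, rfl⟩) (hy ⟨z, rfl⟩)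
  have htop : ⨆ g : P →ₗ[A] G, G.map g = ⊤ := by
    rw [eq_top_iff, ← Submodule.map_le_map_iff_of_injective G.injective_subtype,
      Submodule.map_top, G.range_subtype]
    exact hle
  refine ⟨hT.mem_of_iSup_range hP.mem ((hT.killedBy P hP.mem).sub G) ?_, htop⟩
  exact eq_top_iff.mpr (htop.ge.trans (iSup_mono fun g => LinearMap.map_le_range))

variable {t : Set (FDMod k A)}

theorem IsExtProgenerator.mem_traceClass_idealTrace (hP : IsExtProgenerator J T P)
    {I : Ideal P.EndOp} (hZ : Z ∈ T) (h : I • (⊤ : Submodule P.EndOp (P →ₗ[A] Z)) = ⊤) :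
    Z ∈ traceClass T (idealTrace I) := by
  refine ⟨hZ, eq_top_iff.mpr ?_⟩
  rw [← hP.iSup_range Z hZ, iSup_le_iff]
  intro g
  have hg : g ∈ I • (⊤ : Submodule P.EndOp (P →ₗ[A] Z)) := h.ge trivial
  induction hg using Submodule.smul_induction_on' with
  | smul β hβ f _ =>
    rw [endOp_smul, LinearMap.range_comp]
    exact (Submodule.map_mono (range_le_idealTrace hβ)).trans
      (le_iSup (fun f : P →ₗ[A] Z => (idealTrace I).map f) f)
  | add f _ g _ hf hg =>
    rintro _ ⟨x, rfl⟩
    exact add_mem (hf ⟨x, rfl⟩) (hg ⟨x, rfl⟩)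

theorem notMem_traceClass_idealTrace {I : Ideal P.EndOp} {S : Submodule P.EndOp (P →ₗ[A] Y)}
    (hS : S ≠ ⊥) (hI : I ≤ Module.annihilator P.EndOp S) : P ∉ traceClass T (idealTrace I) := by
  rintro ⟨-, htop⟩
  obtain ⟨s, hs, hs0⟩ := S.ne_bot_iff.mp hS
  refine hs0 (LinearMap.ker_eq_top.mp (eq_top_iff.mpr ?_))
  rw [← htop, iSup_le_iff]
  intro g
  rw [Submodule.map_le_iff_le_comap, ← LinearMap.ker_comp]
  refine iSup₂_le fun β hβ => LinearMap.range_le_ker_iff.mpr ?_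
  exact congrArg Subtype.val (Module.mem_annihilator.mp (hI hβ)
    (MulOpposite.op g • ⟨s, hs⟩ : S))

theorem IsExtProgenerator.annihilator_smul_top (hP : IsExtProgenerator J T P)
    (hT : IsTorsionClass J T) (hZ : Z ∈ T) (h : ∀ g : Z →ₗ[A] Y, g = 0)
    (S : Submodule P.EndOp (P →ₗ[A] Y)) [IsSimpleModule P.EndOp S] :
    Module.annihilator P.EndOp S • (⊤ : Submodule P.EndOp (P →ₗ[A] Z)) = ⊤ := by
  by_contra htop
  obtain ⟨f, hf⟩ := exists_linearMap_ne_zero_of_annihilator_smul_ne_top htop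
  obtain ⟨g, hg⟩ := hP.exists_eq_comp hT hZ (S.subtype ∘ₗ f)
  rw [h g] at hg
  exact hf (LinearMap.ext fun φ => Subtype.ext ((hg φ).trans (LinearMap.zero_comp φ)))

/-- With `Q` the `t`-torsion-free quotient of the generator `P` of `T` and `S` a simple submodule
of `Hom(P, Q)`, the ideal is a stable power of the annihilator of `S`. -/
theorem IsTorsionClass.exists_hasLeftApprox_ssubset (ht : IsTorsionClass J t)
    (hT : IsTorsionClass J T) (happ : HasLeftApprox T) (h : t ⊂ T) :
    ∃ T', IsTorsionClass J T' ∧ HasLeftApprox T' ∧ t ⊆ T' ∧ T' ⊂ T := by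
  obtain ⟨P, hP⟩ := happ.exists_isExtProgenerator hT
  obtain ⟨U, hU, hQ⟩ := ht.exists_torsion_submodule (hT.killedBy P hP.mem)
  have hU0 : U.mkQ ≠ 0 := fun h0 => h.2 fun Z hZ =>
    ht.mem_of_iSup_range (ht.of_equiv (Z := P.sub U) (LinearEquiv.ofTop U
      (by rw [← U.ker_mkQ, h0, LinearMap.ker_zero])) hU) (hT.killedBy Z hZ) (hP.iSup_range Z hZ)
  have : Nontrivial (P →ₗ[A] P.quot U) := ⟨U.mkQ, 0, hU0⟩
  obtain ⟨S, hS⟩ := IsAtomic.exists_atom (Submodule P.EndOp (P →ₗ[A] P.quot U))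
  have : IsSimpleModule P.EndOp S := isSimpleModule_iff_isAtom.mpr hS
  obtain ⟨n, hn⟩ := exists_pow_succ_mul_self (Module.annihilator P.EndOp S)
  have hpow (Z : FDMod k A) (hZ : Z ∈ t) (n : ℕ) : Module.annihilator P.EndOp S ^ n •
      (⊤ : Submodule P.EndOp (P →ₗ[A] Z)) = ⊤ := by
    induction n with
    | zero => exact Submodule.one_smul _
    | succ n ih =>
      rw [Submodule.pow_succ, Submodule.mul_smul, hP.annihilator_smul_top hT (h.1 hZ) (hQ Z hZ), ih]
  refine ⟨_, hP.isTorsionClass_traceClass hT _,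
    hP.hasLeftApprox_traceClass hT (hP.sub_idealTrace_mem hT hn),
    fun Z hZ => hP.mem_traceClass_idealTrace (h.1 hZ) (hpow Z hZ _), fun Z hZ => hZ.1,
    fun hle => notMem_traceClass_idealTrace hS.1 ?_ (hle hP.mem)⟩
  exact (Submodule.pow_succ _).trans_le Ideal.mul_le_right

theorem isTorsionClass_killedBy (J : TwoSidedIdeal A) :
    IsTorsionClass J {Z : FDMod k A | Z.KilledBy J} := by
  simpa [leftPerp] using isTorsionClass_leftPerp (k := k) J ∅

theorem hasLeftApprox_killedBy [FiniteDimensional k A] (J : TwoSidedIdeal A) :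
    HasLeftApprox {Z : FDMod k A | Z.KilledBy J} := by
  let regular : FDMod k A := ⟨A⟩
  refine ⟨regular.quot (⊥ ⊔ J.asIdeal • ⊤), Submodule.mkQ _ 1,
    killedBy_quot_smul_top_sup regular ⊥, fun Z hZ z => ?_⟩
  exact ⟨Submodule.liftQ _ (LinearMap.toSpanSingleton A Z z)
    (sup_le bot_le (hZ.smul_top_le_ker _)), one_smul A z⟩

theorem IsTorsionClass.hasLeftApprox_of_finite [FiniteDimensional k A]
    (hfin : {T : Set (FDMod k A) | IsTorsionClass J T}.Finite) (ht : IsTorsionClass J t) :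
    HasLeftApprox t := by
  let C := {T | IsTorsionClass J T ∧ HasLeftApprox T ∧ t ⊆ T}
  have hC : C.Finite := hfin.subset fun T hT => hT.1
  obtain ⟨T, ⟨hT, happ, hle⟩, hmin⟩ := hC.exists_minimal
    ⟨_, isTorsionClass_killedBy J, hasLeftApprox_killedBy J, ht.killedBy⟩
  rcases hle.eq_or_ssubset with rfl | hlt
  · exact happ
  · obtain ⟨T', hT', happ', hle', hlt'⟩ := ht.exists_hasLeftApprox_ssubset hT happ hlt
    exact absurd (hmin ⟨hT', happ', hle'⟩ hlt'.1) hlt'.2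

end Reduction

section ProjectiveCover

variable {R P N : Type*} [Ring R] [AddCommGroup P] [Module R P] [AddCommGroup N] [Module R N]

/-- `p` is a projective cover of `N`: its kernel is superfluous. -/
structure IsProjectiveCover (p : P →ₗ[R] N) : Prop where
  projective : Module.Projective R P
  surjective : Function.Surjective p
  eq_top : ∀ V : Submodule R P, V ⊔ p.ker = ⊤ → V = ⊤

/-- The covering module is a minimal submodule of a free module among those mapping onto `N`. -/
theorem exists_isProjectiveCover (R N : Type*) [Ring R] [IsArtinianRing R] [AddCommGroup N]
    [Module R N] [Module.Finite R N] :
    ∃ (n : ℕ) (U : Submodule R (Fin n → R)) (p : U →ₗ[R] N), IsProjectiveCover p := by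
  obtain ⟨n, q, hq⟩ := Module.Finite.exists_fin' R N
  obtain ⟨U, hU, hmin⟩ := exists_minimal_of_wellFoundedLT
    (fun U : Submodule R (Fin n → R) => U.map q = ⊤)
    ⟨⊤, (Submodule.map_top q).trans (LinearMap.range_eq_top.mpr hq)⟩
  have hp : Function.Surjective (q ∘ₗ U.subtype) := by
    rw [← LinearMap.range_eq_top, LinearMap.range_comp, U.range_subtype, hU]
  have htop (V : Submodule R U) (hV : V ⊔ (q ∘ₗ U.subtype).ker = ⊤) : V = ⊤ := by
    have hmap : (V.map U.subtype).map q = ⊤ := by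
      rwa [← Submodule.map_comp, LinearMap.map_eq_top_iff (LinearMap.range_eq_top.mpr hp)]
    rw [eq_top_iff, ← Submodule.map_le_map_iff_of_injective U.injective_subtype,
      Submodule.map_top, U.range_subtype]
    exact hmin hmap (Submodule.map_subtype_le U V)
  refine ⟨n, U, q ∘ₗ U.subtype, ?_, hp, htop⟩
  obtain ⟨θ, hθ⟩ := Module.projective_lifting_property (q ∘ₗ U.subtype) q hp
  have he : Function.Surjective (θ ∘ₗ U.subtype) := by
    refine LinearMap.range_eq_top.mp (htop _ (eq_top_iff.mpr fun x _ => ?_))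
    rw [← sub_add_cancel x (θ x), add_comm]
    refine Submodule.add_mem_sup ⟨x, rfl⟩ ?_
    rw [LinearMap.mem_ker, map_sub, sub_eq_zero]
    exact (LinearMap.congr_fun hθ x).symm
  let e := LinearEquiv.ofBijective (θ ∘ₗ U.subtype)
    ⟨IsNoetherian.injective_of_surjective_endomorphism _ he, he⟩
  exact Module.Projective.of_split U.subtype (e.symm ∘ₗ θ)
    (LinearMap.ext fun x => e.symm_apply_apply x)

end ProjectiveCover

section SiltingClass

variable {I J : TwoSidedIdeal A} {T : Set (FDMod k A)} {X Z : FDMod k A}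
  {P Q : Type*} [AddCommGroup P] [Module A P] [AddCommGroup Q] [Module A Q]

/-- The modules `Z` over `A / J` such that every map `Q → Z` factors through `σ : Q → P`. -/
def siltingClass (J : TwoSidedIdeal A) (σ : Q →ₗ[A] P) : Set (FDMod k A) :=
  {Z | Z.KilledBy J ∧ ∀ y : Q →ₗ[A] Z, ∃ h : P →ₗ[A] Z, h ∘ₗ σ = y}

theorem isTorsionClass_siltingClass [Module.Projective A P] [Module.Projective A Q]
    (J : TwoSidedIdeal A) (σ : Q →ₗ[A] P) : IsTorsionClass J (siltingClass (k := k) J σ) where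
  killedBy Z hZ := hZ.1
  of_subsingleton Z _ := ⟨fun a _ x => Subsingleton.elim _ _, fun y =>
    ⟨0, LinearMap.ext fun x => Subsingleton.elim _ _⟩⟩
  of_surjective g hg hZ := ⟨hZ.1.of_surjective g hg, fun y => by
    obtain ⟨l, rfl⟩ := Module.projective_lifting_property g y hg
    obtain ⟨h, rfl⟩ := hZ.2 l
    exact ⟨g ∘ₗ h, LinearMap.comp_assoc σ h g⟩⟩
  of_extension {Z} U hZ hU hQ := ⟨hZ, fun y => by
    obtain ⟨h', hh'⟩ := hQ.2 (U.mkQ ∘ₗ y)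
    obtain ⟨h, rfl⟩ := Module.projective_lifting_property U.mkQ h' U.mkQ_surjective
    have hmem (x : Q) : (y - h ∘ₗ σ) x ∈ U := by
      rw [← U.ker_mkQ, LinearMap.mem_ker, LinearMap.sub_apply, map_sub, sub_eq_zero]
      exact (LinearMap.congr_fun hh' x).symm
    obtain ⟨l, hl⟩ := hU.2 ((y - h ∘ₗ σ).codRestrict U hmem)
    refine ⟨h + U.subtype ∘ₗ l, ?_⟩
    rw [LinearMap.add_comp, LinearMap.comp_assoc, hl, LinearMap.subtype_comp_codRestrict,
      add_sub_cancel]⟩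

theorem exists_linearMap_of_mem_siltingClass {P₁ : Type*} [AddCommGroup P₁] [Module A P₁]
    {P₀ : FDMod k A} {f : P₁ →ₗ[A] P₀} {α : P₀}
    (hZ : Z ∈ siltingClass J (f.coprod (LinearMap.toSpanSingleton A P₀ α))) (z : Z) :
    ∃ h : P₀.quot (f.range ⊔ J.asIdeal • ⊤) →ₗ[A] Z, h (Submodule.mkQ _ α) = z := by
  obtain ⟨h, hh⟩ := hZ.2 (LinearMap.coprod 0 (LinearMap.toSpanSingleton A Z z))
  have hf : h ∘ₗ f = 0 := by
    simpa only [LinearMap.comp_assoc, LinearMap.coprod_inl] using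
      congrArg (· ∘ₗ LinearMap.inl A P₁ A) hh
  have hα : h α = z := by
    simpa using LinearMap.congr_fun hh (0, 1)
  exact ⟨Submodule.liftQ _ h (sup_le (LinearMap.range_le_ker_iff.mpr hf)
    (hZ.1.smul_top_le_ker h)), hα⟩

/-- The torsion class `T` of modules over `A / J` is the silting class of `P₁ × A → P₀`, given by
`f` on `P₁` and by `1 ↦ α` on `A`. The cokernel of `f` over `A / J` belongs to it. -/
structure IsSiltingPresentation (J : TwoSidedIdeal A) (T : Set (FDMod k A)) {P₀ P₁ : FDMod k A}
    (f : P₁ →ₗ[A] P₀) (α : P₀) : Prop where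
  projective_left : Module.Projective A P₁
  projective_right : Module.Projective A P₀
  eq_siltingClass : T = siltingClass J (f.coprod (LinearMap.toSpanSingleton A P₀ α))
  quot_mem : P₀.quot (f.range ⊔ J.asIdeal • ⊤) ∈ T

variable {T : Set (FDMod k A)} {M P₀ : FDMod k A} {m : M}

/-- The obstruction `y - h₀ ∘ f` has its image in `y (ker p)`, hence vanishes because `ker p` is
superfluous. -/
theorem IsMinimalLeftApprox.exists_comp_eq [Module.Projective A P] (hM : IsMinimalLeftApprox T M m)
    (hT : IsTorsionClass J T) (hX : X.KilledBy J) {q : X →ₗ[A] M} (hq : Function.Surjective q)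
    {p : Q →ₗ[A] q.ker} (hp : IsProjectiveCover p) {π : P →ₗ[A] X} (hπ : π.ker ≤ J.asIdeal • ⊤)
    {f : Q →ₗ[A] P} (hf : π ∘ₗ f = q.ker.subtype ∘ₗ p) (hZ : Z ∈ T) (y : Q →ₗ[A] Z) :
    ∃ h : P →ₗ[A] Z, h ∘ₗ f = y := by
  let V := p.ker.map y
  have hpV : p.ker ≤ (V.mkQ ∘ₗ y).ker := by
    rw [LinearMap.ker_comp, V.ker_mkQ]
    exact Submodule.le_comap_map y p.ker
  let g : q.ker →ₗ[A] Z ⧸ V := p.ker.liftQ (V.mkQ ∘ₗ y) hpV ∘ₗ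
    (p.quotKerEquivOfSurjective hp.surjective).symm
  have hg : g ∘ₗ p = V.mkQ ∘ₗ y := LinearMap.ext fun x => by
    have hx : (p.quotKerEquivOfSurjective hp.surjective).symm (p x) = p.ker.mkQ x :=
      LinearEquiv.symm_apply_eq _ |>.mpr rfl
    simp [g, hx]
  obtain ⟨l, hl⟩ := hM.exists_extend hT hX
    (hT.of_surjective (Y := Z.quot V) V.mkQ V.mkQ_surjective hZ) q hq g
  obtain ⟨h, hh⟩ := Module.projective_lifting_property V.mkQ (l ∘ₗ π) V.mkQ_surjective
  refine ⟨h, (sub_eq_zero.mp (LinearMap.ker_eq_top.mp (hp.eq_top _ ?_))).symm⟩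
  have hrange (x : Q) : (y - h ∘ₗ f) x ∈ V := by
    rw [← V.ker_mkQ, LinearMap.mem_ker, ← LinearMap.comp_apply, LinearMap.comp_sub,
      ← LinearMap.comp_assoc, hh, LinearMap.comp_assoc, hf, ← LinearMap.comp_assoc, hl, hg,
      sub_self, LinearMap.zero_apply]
  have hker (x : Q) (hx : x ∈ p.ker) : (y - h ∘ₗ f) x = y x := by
    have hfx : f x ∈ π.ker := by
      rw [LinearMap.mem_ker, ← LinearMap.comp_apply, hf, LinearMap.comp_apply,
        LinearMap.mem_ker.mp hx, map_zero]
    have hhx : h (f x) = 0 := (hT.killedBy Z hZ).smul_top_le_ker h (hπ hfx)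
    rw [LinearMap.sub_apply, LinearMap.comp_apply, hhx, sub_zero]
  refine eq_top_iff.mpr fun x _ => ?_
  obtain ⟨x', hx', hxx'⟩ := hrange x
  rw [← sub_add_cancel x x']
  refine Submodule.add_mem_sup ?_ hx'
  rw [LinearMap.mem_ker, map_sub, hker x' hx', hxx', sub_self]

theorem IsMinimalLeftApprox.isSiltingPresentation {P₁ : FDMod k A} [Module.Projective A P₀]
    (hM : IsMinimalLeftApprox T M m) (hT : IsTorsionClass J T) (hX : X.KilledBy J)
    {q : X →ₗ[A] M} (hq : Function.Surjective q) {p : P₁ →ₗ[A] q.ker} (hp : IsProjectiveCover p)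
    {π : P₀ →ₗ[A] X} (hπ : Function.Surjective π) (hker : π.ker ≤ J.asIdeal • ⊤)
    {f : P₁ →ₗ[A] P₀} (hf : π ∘ₗ f = q.ker.subtype ∘ₗ p) {α : P₀} (hα : q (π α) = m) :
    IsSiltingPresentation J T f α := by
  have hle : (q ∘ₗ π).ker ≤ f.range ⊔ J.asIdeal • ⊤ := fun x hx => by
    obtain ⟨y, hy⟩ := hp.surjective ⟨π x, hx⟩
    rw [← add_sub_cancel (f y) x]
    refine Submodule.add_mem_sup ⟨y, rfl⟩ (hker ?_)
    rw [LinearMap.mem_ker, map_sub, ← LinearMap.comp_apply, hf, LinearMap.comp_apply, hy,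
      q.ker.subtype_apply, sub_self]
  have hquot : P₀.quot (f.range ⊔ J.asIdeal • ⊤) ∈ T :=
    hT.of_surjective (Submodule.factor hle ∘ₗ
        ((q ∘ₗ π).quotKerEquivOfSurjective (hq.comp hπ)).symm.toLinearMap)
      ((Submodule.factor_surjective hle).comp (LinearEquiv.surjective _)) hM.mem
  have hqf : q ∘ₗ π ∘ₗ f = 0 := by
    rw [hf, ← LinearMap.comp_assoc, q.comp_ker_subtype, LinearMap.zero_comp]
  refine ⟨hp.projective, inferInstance, Set.Subset.antisymm
    (fun Z hZ => ⟨hT.killedBy Z hZ, fun y => ?_⟩) (fun Z hZ => ?_), hquot⟩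
  · obtain ⟨h, hh⟩ := hM.exists_comp_eq hT hX hq hp hker hf hZ (y ∘ₗ LinearMap.inl A P₁ A)
    obtain ⟨u, hu⟩ := hM.exists_apply_eq Z hZ (y (0, 1) - h α)
    refine ⟨h + u ∘ₗ q ∘ₗ π, LinearMap.prod_ext ?_ (LinearMap.ext_ring ?_)⟩
    · rw [LinearMap.comp_assoc, LinearMap.coprod_inl, LinearMap.add_comp, hh,
        LinearMap.comp_assoc, LinearMap.comp_assoc, hqf, LinearMap.comp_zero, add_zero]
    · simp [hα, hu]
  · refine hT.mem_of_iSup_range hquot hZ.1 (eq_top_iff.mpr fun z _ => ?_)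
    obtain ⟨h, rfl⟩ := exists_linearMap_of_mem_siltingClass hZ z
    exact Submodule.mem_iSup_of_mem h ⟨_, rfl⟩

theorem exists_isSiltingPresentation [FiniteDimensional k A] (hT : IsTorsionClass J T)
    (h : HasLeftApprox T) :
    ∃ (P₀ P₁ : FDMod k A) (f : P₁ →ₗ[A] P₀) (α : P₀), IsSiltingPresentation J T f α := by
  have := IsArtinianRing.of_finite k A
  obtain ⟨M, m, hM⟩ := h.exists_isMinimalLeftApprox hT
  have : Module.Finite A M := .of_restrictScalars_finite k A M
  obtain ⟨b, q, hq⟩ := Module.Finite.exists_fin' A M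
  let P₀ : FDMod k A := ⟨Fin b → A⟩
  let N : Submodule A P₀ := ⊥ ⊔ J.asIdeal • ⊤
  let q' : P₀.quot N →ₗ[A] M :=
    N.liftQ q (sup_le bot_le ((hT.killedBy M hM.mem).smul_top_le_ker q))
  have hq' : Function.Surjective q' := fun x => (hq x).imp' N.mkQ fun _ h => h
  obtain ⟨c, P₁, p, hp⟩ := exists_isProjectiveCover A q'.ker
  have := hp.projective
  obtain ⟨f, hf⟩ := Module.projective_lifting_property N.mkQ (q'.ker.subtype ∘ₗ p)
    N.mkQ_surjective
  obtain ⟨α, hα⟩ := hq m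
  exact ⟨P₀, ⟨P₁⟩, f, α, hM.isSiltingPresentation hT (killedBy_quot_smul_top_sup P₀ ⊥) hq' hp
    N.mkQ_surjective (N.ker_mkQ.trans_le (sup_le bot_le le_rfl)) hf hα⟩

/-- If `g` takes values in the common kernel of the pairings `x ↦ ξ (φ(·) x)`, then it is a sum of
maps `φ(·) x` with `x` in this kernel. -/
theorem eq_zero_of_forall_toSpanSingleton_comp_eq_zero {Q : Type*} [AddCommGroup Q] [Module A Q]
    [Module.Finite A Q] [Module.Projective A Q] {ξ : Dual k (Q →ₗ[A] X)} {g : Q →ₗ[A] X}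
    (hg : ∀ (x : Q) (φ : Q →ₗ[A] A), ξ (LinearMap.toSpanSingleton A X (g x) ∘ₗ φ) = 0) :
    ξ g = 0 := by
  obtain ⟨n, p, hp⟩ := Module.Finite.exists_fin' A Q
  obtain ⟨s, hs⟩ := Module.projective_lifting_property p LinearMap.id hp
  let e (i : Fin n) : Q := p fun j => if i = j then 1 else 0
  have hsum : g = ∑ i, LinearMap.toSpanSingleton A X (g (e i)) ∘ₗ LinearMap.proj i ∘ₗ s := by
    refine LinearMap.ext fun x => ?_
    calc g x = g (∑ i, s x i • e i) := by
          rw [← LinearMap.pi_apply_eq_sum_univ p]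
          exact congrArg g (LinearMap.congr_fun hs x).symm
      _ = _ := by simp
  rw [hsum, map_sum]
  exact Finset.sum_eq_zero fun i _ => hg _ _

/-- The submodule is the common kernel of the pairings `x ↦ ξ (φ(·) x)`, for a functional `ξ`
separating `y` from the maps that factor through `σ`. -/
theorem exists_quot_notMem_siltingClass [FiniteDimensional k A] [Module.Projective A P]
    {Q : FDMod k A} [Module.Projective A Q] (σ : Q →ₗ[A] P)
    (hX : X.KilledBy J) (h : X ∉ siltingClass J σ) :
    ∃ K : Submodule A X, X.quot K ∉ siltingClass J σ ∧
      finrank k (X ⧸ K) ≤ finrank k (Q →ₗ[A] A) := by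
  have : Module.Finite A Q := .of_restrictScalars_finite k A Q
  obtain ⟨y, hy⟩ : ∃ y, y ∉ LinearMap.range (LinearMap.lcomp k X σ) := by
    by_contra! hall
    exact h ⟨hX, hall⟩
  obtain ⟨ξ, hξy, hξ⟩ := Submodule.exists_le_ker_of_notMem hy
  let Θ : X →ₗ[k] Dual k (Q →ₗ[A] A) :=
    { toFun x := ξ ∘ₗ LinearMap.compRight k (LinearMap.toSpanSingleton A X x)
      map_add' x y := LinearMap.ext fun φ => by
        rw [LinearMap.toSpanSingleton_add]
        simp [LinearMap.add_comp]
      map_smul' c x := LinearMap.ext fun φ => by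
        simp [LinearMap.toSpanSingleton_smul, LinearMap.smul_comp] }
  have hΘ (x : X) : Θ x = 0 ↔ ∀ φ, ξ (LinearMap.toSpanSingleton A X x ∘ₗ φ) = 0 :=
    LinearMap.ext_iff
  let K : Submodule A X :=
    { Θ.ker with
      smul_mem' a x hx := (hΘ _).mpr fun φ => by
        rw [← (hΘ x).mp hx (LinearMap.toSpanSingleton A A a ∘ₗ φ)]
        congr 1
        ext q
        simp [mul_smul] }
  have hK (x : X) : x ∈ K ↔ ∀ φ, ξ (LinearMap.toSpanSingleton A X x ∘ₗ φ) = 0 := hΘ x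
  refine ⟨K, fun hmem => hξy ?_, ?_⟩
  · obtain ⟨h', hh'⟩ := hmem.2 (K.mkQ ∘ₗ y)
    obtain ⟨h, rfl⟩ := Module.projective_lifting_property K.mkQ h' K.mkQ_surjective
    have hzero : ξ (y - h ∘ₗ σ) = 0 := by
      refine eq_zero_of_forall_toSpanSingleton_comp_eq_zero fun x => (hK _).mp ?_
      rw [← K.ker_mkQ, LinearMap.mem_ker, LinearMap.sub_apply, map_sub, sub_eq_zero]
      exact (LinearMap.congr_fun hh' x).symm
    have hhσ : ξ (h ∘ₗ σ) = 0 := hξ ⟨h, rfl⟩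
    rwa [map_sub, hhσ, sub_zero] at hzero
  · calc finrank k (X ⧸ K) = finrank k (X ⧸ K.restrictScalars k) :=
          (Submodule.Quotient.restrictScalarsEquiv k K).finrank_eq.symm
      _ = finrank k Θ.range := Θ.quotKerEquivRange.finrank_eq
      _ ≤ finrank k (Dual k (Q →ₗ[A] A)) := Submodule.finrank_le _
      _ = finrank k (Q →ₗ[A] A) := Subspace.dual_finrank_eq

end SiltingClass

section FiberHeart

variable {I I' J : TwoSidedIdeal A} {T : Set (FDMod k A)} {X Y Z P₀ P₁ : FDMod k A}

theorem leftPerp_rightPerp_subset {T' : Set (FDMod k A)} (hT' : IsTorsionClass I T')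
    (h : T ⊆ T') : leftPerp I (rightPerp T) ⊆ T' := fun _ hZ =>
  hT'.mem_of_forall_eq_zero hZ.1 fun _ hY => hZ.2 _ fun _ hX => hY _ (h hX)

theorem siltingClass_mono {P Q : Type*} [AddCommGroup P] [Module A P] [AddCommGroup Q]
    [Module A Q] (h : I ≤ J) (σ : Q →ₗ[A] P) :
    siltingClass (k := k) J σ ⊆ siltingClass I σ :=
  fun _ hZ => ⟨fun a ha => hZ.1 a (h ha), hZ.2⟩

/-- The torsion classes of modules over `A / I` whose restriction to modules over `A / J` is `T`
form an interval; these are the nonzero modules in its heart, that is, in its largest element but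
without nonzero maps from its smallest element. -/
structure IsFiberHeart (I J : TwoSidedIdeal A) (T : Set (FDMod k A)) (Y : FDMod k A) : Prop where
  nontrivial : Nontrivial Y
  killedBy : Y.KilledBy I
  mem_of_surjective : ∀ {Z : FDMod k A} (g : Y →ₗ[A] Z), Function.Surjective g → Z.KilledBy J →
    Z ∈ T
  mem_rightPerp : Y ∈ rightPerp T

theorem IsFiberHeart.not_killedBy (hY : IsFiberHeart I J T Y) : ¬ Y.KilledBy J := fun h => by
  have := hY.nontrivial
  obtain ⟨y, hy⟩ := exists_ne (0 : Y)
  exact hy (LinearMap.congr_fun (hY.mem_rightPerp Y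
    (hY.mem_of_surjective LinearMap.id Function.surjective_id h) LinearMap.id) y)

theorem IsFiberHeart.sub_range (hY : IsFiberHeart I J T Y) (hZ : Z ∈ rightPerp T)
    {g : Y →ₗ[A] Z} (hg : g ≠ 0) : IsFiberHeart I J T (Z.sub g.range) where
  nontrivial := Submodule.nontrivial_iff_ne_bot.mpr (LinearMap.range_eq_bot.not.mpr hg)
  killedBy := hY.killedBy.of_surjective g.rangeRestrict g.surjective_rangeRestrict
  mem_of_surjective f hf := hY.mem_of_surjective (f ∘ₗ g.rangeRestrict)
    (hf.comp g.surjective_rangeRestrict)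
  mem_rightPerp := sub_mem_rightPerp hZ g.range

theorem FDMod.IsBrick.isFiberHeart (hX : X.IsBrick) (hI : X.KilledBy I) (hJ : ¬ X.KilledBy J) :
    IsFiberHeart I J (leftPerp J {X}) X where
  nontrivial := hX.1
  killedBy := hI
  mem_of_surjective {Z} g hg hZ := by
    refine ⟨hZ, fun Y hY h => ?_⟩
    obtain rfl : X = Y := Eq.symm hY
    obtain ⟨c, hc⟩ := hX.2 (h ∘ₗ g)
    obtain ⟨a, ha, x, hx⟩ : ∃ a ∈ J, ∃ x : X, a • x ≠ 0 := by
      simpa [KilledBy] using hJ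
    have hgx : g (a • x) = 0 := by rw [map_smul, hZ a ha]
    have hc0 : c = 0 := by
      have := hc (a • x)
      rw [LinearMap.comp_apply, hgx, map_zero, eq_comm, smul_eq_zero] at this
      exact this.resolve_right hx
    refine LinearMap.cancel_right hg |>.mp (LinearMap.ext fun y => ?_)
    rw [hc, hc0, zero_smul, LinearMap.zero_comp, LinearMap.zero_apply]
  mem_rightPerp Z hZ := hZ.2 X rfl

section Bound

theorem exists_isFiberHeart_of_notMem (hT : IsTorsionClass J T) (hIJ : I ≤ J)
    (hI : Z.KilledBy I) (hZ : Z ∉ leftPerp I (rightPerp T))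
    (h : ∀ {Y : FDMod k A} (g : Z →ₗ[A] Y), Function.Surjective g → Y.KilledBy J → Y ∈ T) :
    ∃ Y, IsFiberHeart I J T Y ∧ finrank k Y ≤ finrank k Z := by
  have hD := isTorsionClass_leftPerp (k := k) I (rightPerp T)
  obtain ⟨U, hU, hQ⟩ := hD.exists_torsion_submodule hI
  refine ⟨Z.quot U, ⟨?_, hI.quot U, fun g hg => h (g ∘ₗ U.mkQ) (hg.comp U.mkQ_surjective),
    fun N hN => hQ N ⟨fun a ha => hT.killedBy N hN a (hIJ ha), fun Y hY => hY N hN⟩⟩,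
    finrank_le_of_surjective U.mkQ U.mkQ_surjective⟩
  by_contra! hs
  exact hZ (hD.of_extension U hI hU (hD.of_subsingleton _ hs))

theorem exists_isFiberHeart_of_quot_notMem (hT : IsTorsionClass J T) (hIJ : I ≤ J)
    (V : Submodule A P₀) (hI : P₀.quot (V ⊔ I.asIdeal • ⊤) ∉ leftPerp I (rightPerp T))
    (hJ : P₀.quot (V ⊔ J.asIdeal • ⊤) ∈ T) :
    ∃ Y, IsFiberHeart I J T Y ∧ finrank k Y ≤ finrank k P₀ := by
  have hquot {Z : FDMod k A} (g : P₀.quot (V ⊔ I.asIdeal • ⊤) →ₗ[A] Z)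
      (hg : Function.Surjective g) (hZ : Z.KilledBy J) : Z ∈ T := by
    let g' : P₀ →ₗ[A] Z := g ∘ₗ (V ⊔ I.asIdeal • ⊤).mkQ
    have hg' : Function.Surjective g' := hg.comp (Submodule.mkQ_surjective _)
    have hV : V ≤ g'.ker :=
      (le_sup_left.trans (Submodule.ker_mkQ _).ge).trans (LinearMap.ker_le_ker_comp _ g)
    refine hT.of_surjective (Submodule.liftQ _ g' (sup_le hV (hZ.smul_top_le_ker g'))) ?_ hJ
    rwa [← LinearMap.range_eq_top, Submodule.range_liftQ, LinearMap.range_eq_top]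
  obtain ⟨Y, hY, hle⟩ := exists_isFiberHeart_of_notMem hT hIJ
    (killedBy_quot_smul_top_sup P₀ V) hI hquot
  exact ⟨Y, hY, hle.trans (finrank_le_of_surjective _ (Submodule.mkQ_surjective _))⟩

theorem exists_isFiberHeart_of_notMem_siltingClass [FiniteDimensional k A] {P : Type*}
    [AddCommGroup P] [Module A P] [Module.Projective A P] {Q : FDMod k A} [Module.Projective A Q]
    {σ : Q →ₗ[A] P} (hT : IsTorsionClass J T) (hIJ : I ≤ J) (hσ : T ⊆ siltingClass I σ)
    (hX : IsFiberHeart I J T X) (hXσ : X ∉ siltingClass I σ) :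
    ∃ Y, IsFiberHeart I J T Y ∧ finrank k Y ≤ finrank k (Q →ₗ[A] A) := by
  obtain ⟨K, hK, hfin⟩ := exists_quot_notMem_siltingClass σ hX.killedBy hXσ
  obtain ⟨Y, hY, hle⟩ := exists_isFiberHeart_of_notMem hT hIJ (hX.killedBy.quot K)
    (fun h => hK (leftPerp_rightPerp_subset (isTorsionClass_siltingClass I σ) hσ h))
    fun g hg => hX.mem_of_surjective (g ∘ₗ K.mkQ) (hg.comp K.mkQ_surjective)
  exact ⟨Y, hY, hle.trans hfin⟩

/-- If the cokernel of `f` over `A / I` lies in the smallest torsion class over `A / I` containing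
`T`, it has no nonzero map to `X`, hence `X` is not in the silting class. -/
theorem IsSiltingPresentation.exists_isFiberHeart [FiniteDimensional k A] {f : P₁ →ₗ[A] P₀}
    {α : P₀} (hf : IsSiltingPresentation J T f α) (hIJ : I ≤ J) (hX : IsFiberHeart I J T X) :
    ∃ Y, IsFiberHeart I J T Y ∧
      finrank k Y ≤ max (finrank k P₀) (finrank k (P₁ × A →ₗ[A] A)) := by
  have := hf.projective_left
  have := hf.projective_right
  let Q : FDMod k A := ⟨P₁ × A⟩
  let σ : Q →ₗ[A] P₀ := f.coprod (LinearMap.toSpanSingleton A P₀ α)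
  have hQ : Module.Projective A Q := inferInstanceAs (Module.Projective A (P₁ × A))
  have hT : IsTorsionClass J T := hf.eq_siltingClass ▸ isTorsionClass_siltingClass J σ
  by_cases hM : P₀.quot (f.range ⊔ I.asIdeal • ⊤) ∈ leftPerp I (rightPerp T)
  · have hXσ : X ∉ siltingClass I σ := fun hmem => by
      have := hX.nontrivial
      obtain ⟨x, hx⟩ := exists_ne (0 : X)
      obtain ⟨h, hh⟩ := exists_linearMap_of_mem_siltingClass hmem x
      exact hx (by rw [← hh, hM.2 X hX.mem_rightPerp h, LinearMap.zero_apply])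
    have hσ : T ⊆ siltingClass I σ := hf.eq_siltingClass.trans_subset (siltingClass_mono hIJ σ)
    obtain ⟨Y, hY, hle⟩ := exists_isFiberHeart_of_notMem_siltingClass hT hIJ hσ hX hXσ
    exact ⟨Y, hY, hle.trans (le_max_right _ _)⟩
  · obtain ⟨Y, hY, hle⟩ := exists_isFiberHeart_of_quot_notMem hT hIJ f.range hM hf.quot_mem
    exact ⟨Y, hY, hle.trans (le_max_left _ _)⟩

end Bound

section Minimal

variable (hY : MinimalFor (IsFiberHeart I J T) (fun Z => finrank k Z) Y)
  (hZ : MinimalFor (IsFiberHeart I' J T) (fun Z => finrank k Z) Z)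
include hY hZ

theorem bijective_of_minimalFor_isFiberHeart {g : Y →ₗ[A] Z} (hg : g ≠ 0) :
    Function.Bijective g := by
  have hrangeY := hY.1.sub_range hZ.1.mem_rightPerp hg
  have hrangeZ : IsFiberHeart I' J T (Z.sub g.range) :=
    { hrangeY with killedBy := hZ.1.killedBy.sub g.range }
  constructor
  · have hinj := injective_of_finrank_le (Y := Z.sub g.range) g.surjective_rangeRestrict
      (hY.2 hrangeY (finrank_le_of_surjective _ g.surjective_rangeRestrict))
    exact fun x y hxy => hinj (Subtype.ext hxy)
  · rw [← LinearMap.range_eq_top, ← Submodule.range_subtype g.range, LinearMap.range_eq_top]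
    exact surjective_of_finrank_le (Z := Z.sub g.range) g.range.injective_subtype
      (hZ.2 hrangeZ (finrank_le_of_injective _ g.range.injective_subtype))

theorem homOrth_of_minimalFor_isFiberHeart (h : ¬ Y.Iso Z) : Y.HomOrth Z := by
  refine ⟨fun g => ?_, fun g => ?_⟩ <;> by_contra hg
  · exact h ⟨.ofBijective g (bijective_of_minimalFor_isFiberHeart hY hZ hg)⟩
  · exact h ⟨(LinearEquiv.ofBijective g (bijective_of_minimalFor_isFiberHeart hZ hY hg)).symm⟩

omit hZ

theorem isBrick_of_minimalFor_isFiberHeart [IsAlgClosed k] : Y.IsBrick :=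
  have := hY.1.nontrivial
  isBrick_of_injective fun _ hg => (bijective_of_minimalFor_isFiberHeart hY hY hg).1

end Minimal

end FiberHeart

section Selection

theorem exists_isLeast_eventually_le {ι α : Type*} [SemilatticeInf α] [OrderTop α]
    [WellFoundedLT α] (l : Filter ι) (u : ι → α) : ∃ a, IsLeast {a | ∀ᶠ i in l, u i ≤ a} a := by
  obtain ⟨a, ha, hmin⟩ := exists_minimal_of_wellFoundedLT (fun a => ∀ᶠ i in l, u i ≤ a)
    ⟨⊤, .of_forall fun _ => le_top⟩
  refine ⟨a, ha, fun b hb => ?_⟩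
  have hab : ∀ᶠ i in l, u i ≤ a ⊓ b := (ha.and hb).mono fun i hi => le_inf hi.1 hi.2
  exact (hmin hab inf_le_left).trans inf_le_right

theorem exists_seq_pairwise_of_eventually {ι : Type*} {l : Filter ι} [l.NeBot] {p : ι → Prop}
    (hp : ∀ᶠ i in l, p i) {r : ι → ι → Prop} [Std.Symm r]
    (hr : ∀ i, p i → ∀ᶠ j in l, r i j) :
    ∃ f : ℕ → ι, (∀ n, p (f n)) ∧ Pairwise (Function.onFun r f) :=
  exists_seq_of_forall_finset_exists' p r fun s hs =>
    (hp.and ((Filter.eventually_all_finset s).mpr fun i hi => hr i (hs i hi))).exists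

end Selection

section Annihilator

/-- The annihilator of a module, as a two-sided ideal. -/
def FDMod.annihilator (Z : FDMod k A) : TwoSidedIdeal A :=
  TwoSidedIdeal.ker (Module.toAddMonoidEnd A Z)

variable {J : TwoSidedIdeal A} {Z : FDMod k A}

theorem FDMod.mem_annihilator {a : A} : a ∈ Z.annihilator ↔ ∀ x : Z, a • x = 0 := by
  rw [annihilator, TwoSidedIdeal.mem_ker, DFunLike.ext_iff]
  rfl

theorem FDMod.le_annihilator : J ≤ Z.annihilator ↔ Z.KilledBy J :=
  forall₂_congr fun _ _ => mem_annihilator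

variable (k A) in
theorem wellFoundedLT_twoSidedIdeal [FiniteDimensional k A] : WellFoundedLT (TwoSidedIdeal A) :=
  have := IsArtinianRing.of_finite k A
  have : StrictMono (TwoSidedIdeal.asIdeal (R := A)) :=
    TwoSidedIdeal.asIdeal.monotone.strictMono_of_injective fun I K h => by
      ext a
      simp only [← TwoSidedIdeal.mem_asIdeal, h]
  this.wellFoundedLT

end Annihilator

section Final

variable {J : TwoSidedIdeal A} {T : Set (FDMod k A)} {ι : Type*} {X : ι → FDMod k A}

theorem BrickFiniteKilledBy.finite_setOf_killedBy (hJ : BrickFiniteKilledBy k A J)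
    (hbrick : ∀ i, (X i).IsBrick) (hnoniso : ∀ i j, i ≠ j → ¬ (X i).Iso (X j)) :
    {i | (X i).KilledBy J}.Finite := by
  obtain ⟨m, f, hf⟩ := hJ
  choose c hc using fun i : {i | (X i).KilledBy J} => hf (X i) (hbrick i) i.2
  refine Set.finite_coe_iff.mp (Finite.of_injective c fun i j hij => ?_)
  by_contra hne
  obtain ⟨e⟩ := hc i
  obtain ⟨e'⟩ := hc j
  rw [← hij] at e'
  exact hnoniso i j (Subtype.coe_ne_coe.mpr hne) ⟨e.trans e'.symm⟩

theorem exists_minimalFor_isFiberHeart_finrank_le [FiniteDimensional k A]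
    (hT : IsTorsionClass J T) (hfin : {T : Set (FDMod k A) | IsTorsionClass J T}.Finite) :
    ∃ C, ∀ I ≤ J, ∀ X, IsFiberHeart I J T X →
      ∃ Y, MinimalFor (IsFiberHeart I J T) (fun Z => finrank k Z) Y ∧ finrank k Y ≤ C := by
  obtain ⟨P₀, P₁, f, α, hf⟩ := exists_isSiltingPresentation hT (hT.hasLeftApprox_of_finite hfin)
  refine ⟨max (finrank k P₀) (finrank k (P₁ × A →ₗ[A] A)), fun I hIJ X hX => ?_⟩
  obtain ⟨Y, hY⟩ := exists_minimalFor_of_wellFoundedLT (IsFiberHeart I J T)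
    (fun Z => finrank k Z) ⟨X, hX⟩
  obtain ⟨Z, hZ, hle⟩ := hf.exists_isFiberHeart hIJ hX
  exact ⟨Y, hY, ((le_total _ _).elim id (hY.2 hZ)).trans hle⟩

theorem exists_eventually_isFiberHeart (U : Ultrafilter ι)
    (hfin : {T : Set (FDMod k A) | IsTorsionClass J T}.Finite) (hbrick : ∀ i, (X i).IsBrick)
    (hJ : ∀ᶠ i in U, ¬ (X i).KilledBy J) :
    ∃ T, IsTorsionClass J T ∧ ∀ᶠ i in U, IsFiberHeart (X i).annihilator J T (X i) := by
  obtain ⟨T, hT, hTX⟩ := (Ultrafilter.eventually_exists_mem_iff hfin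
    (P := fun T i => T = leftPerp J {X i})).mp
    (.of_forall fun i => ⟨_, isTorsionClass_leftPerp J {X i}, rfl⟩)
  refine ⟨T, hT, (hTX.and hJ).mono ?_⟩
  rintro i ⟨rfl, hi⟩
  exact (hbrick i).isFiberHeart (le_annihilator.mp le_rfl) hi

theorem exists_finrank_eq_of_eventually_isFiberHeart [FiniteDimensional k A] {U : Ultrafilter ι}
    {I : ι → TwoSidedIdeal A} (hI : ∀ᶠ i in U, I i ≤ J)
    (hT : IsTorsionClass J T) (hfin : {T : Set (FDMod k A) | IsTorsionClass J T}.Finite)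
    (hX : ∀ᶠ i in U, IsFiberHeart (I i) J T (X i)) :
    ∃ (d : ℕ) (Y : ι → FDMod k A), ∀ᶠ i in U,
      MinimalFor (IsFiberHeart (I i) J T) (fun Z => finrank k Z) (Y i) ∧
        finrank k (Y i) = d := by
  obtain ⟨C, hC⟩ := exists_minimalFor_isFiberHeart_finrank_le hT hfin
  obtain ⟨Y, hY⟩ := (hI.and hX).mono (fun i hi => hC (I i) hi.1 (X i) hi.2) |>.choice
  obtain ⟨d, -, hd⟩ := (Ultrafilter.eventually_exists_mem_iff (Set.finite_Iic C)
    (P := fun d i => finrank k (Y i) = d)).mp (hY.mono fun i hi => ⟨_, hi.2, rfl⟩)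
  exact ⟨d, Y, (hY.and hd).mono fun i hi => ⟨hi.1.1, hi.2⟩⟩

/-- Were `Y` isomorphic to almost all `Z i`, almost all `I i` would kill `Y`, and so would `J`. -/
theorem IsFiberHeart.eventually_not_iso {U : Ultrafilter ι} {I : ι → TwoSidedIdeal A}
    (hJ : IsLeast {K | ∀ᶠ i in U, I i ≤ K} J) {I' : TwoSidedIdeal A} {Y : FDMod k A}
    (hY : IsFiberHeart I' J T Y) {Z : ι → FDMod k A} (hZ : ∀ᶠ i in U, (Z i).KilledBy (I i)) :
    ∀ᶠ i in U, ¬ Y.Iso (Z i) := by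
  refine Ultrafilter.eventually_not.mpr fun h => hY.not_killedBy (le_annihilator.mp (hJ.2 ?_))
  filter_upwards [hZ, h] with i hi ⟨e⟩
  exact le_annihilator.mpr (hi.of_injective e.toLinearMap e.injective)

theorem exists_pairwise_not_iso {U : Ultrafilter ι} {I : ι → TwoSidedIdeal A}
    (hJ : IsLeast {K | ∀ᶠ i in U, I i ≤ K} J) {Y : ι → FDMod k A} {p : ι → Prop}
    (hp : ∀ᶠ i in U, p i) (hY : ∀ i, p i → IsFiberHeart (I i) J T (Y i)) :
    ∃ f : ℕ → ι, (∀ n, p (f n)) ∧ Pairwise fun m n => ¬ (Y (f m)).Iso (Y (f n)) := by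
  have : Std.Symm fun i j => ¬ (Y i).Iso (Y j) := ⟨fun i j h ⟨e⟩ => h ⟨e.symm⟩⟩
  exact exists_seq_pairwise_of_eventually hp fun i hi =>
    (hY i hi).eventually_not_iso hJ (hp.mono fun j hj => (hY j hj).killedBy)

end Final

/-- If `A` is a minimal brick-infinite algebra admitting infinitely
many pairwise non-isomorphic unfaithful bricks, then there is a positive integer `d`
such that `A` admits an infinite semibrick consisting of bricks of `k`-dimension `d`. -/
theorem stmt8 {k A : Type u} [Field k] [IsAlgClosed k] [Ring A] [Algebra k A]
    [FiniteDimensional k A] (hmin : MinimalBrickInfinite k A)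
    {J : Type v} [Infinite J] (X : J → FDMod k A)
    (hbrick : ∀ j, (X j).IsBrick)
    (hnoniso : ∀ i j, i ≠ j → ¬(X i).Iso (X j))
    (hunfaithful : ∀ j, ∃ a : A, a ≠ 0 ∧ ∀ x : (X j).carrier, a • x = 0) :
    ∃ d : ℕ, 0 < d ∧
      ∃ (L : Type u) (B : L → FDMod k A), Infinite L ∧
        HomOrthFamily B ∧ (∀ l, (B l).IsBrick) ∧
        (∀ l, finrank k (B l).carrier = d) := by
  let U := Filter.hyperfilter J
  have := wellFoundedLT_twoSidedIdeal k A
  obtain ⟨J₀, hJ₀⟩ := exists_isLeast_eventually_le (U : Filter J) fun j => (X j).annihilator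
  have hne : ∃ a ∈ J₀, a ≠ 0 := by
    obtain ⟨j, hj⟩ := hJ₀.1.exists
    obtain ⟨a, ha, hjX⟩ := hunfaithful j
    exact ⟨a, hj (mem_annihilator.mpr hjX), ha⟩
  have hkilled : ∀ᶠ j in U, ¬ (X j).KilledBy J₀ := Filter.hyperfilter_le_cofinite
    ((hmin.2 J₀ hne).finite_setOf_killedBy hbrick hnoniso).eventually_cofinite_notMem
  have hfin := (hmin.2 J₀ hne).finite_isTorsionClass
  obtain ⟨T, hT, hX⟩ := exists_eventually_isFiberHeart U hfin hbrick hkilled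
  obtain ⟨d, Y, hY⟩ := exists_finrank_eq_of_eventually_isFiberHeart hJ₀.1 hT hfin hX
  obtain ⟨f, hf, hpair⟩ := exists_pairwise_not_iso hJ₀ hY fun j hj => hj.1.1
  have hnt (n : ℕ) : Nontrivial (Y (f n)) := (hf n).1.1.nontrivial
  refine ⟨d, (hf 0).2 ▸ finrank_pos, ULift ℕ, fun l => Y (f l.down), inferInstance,
    ⟨fun l => hnt l.down, fun l m h => hpair (ULift.down_injective.ne h), fun l m h =>
      homOrth_of_minimalFor_isFiberHeart (hf l.down).1 (hf m.down).1
        (hpair (ULift.down_injective.ne h))⟩,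
    fun l => isBrick_of_minimalFor_isFiberHeart (hf l.down).1, fun l => (hf l.down).2⟩
end

section
/- Let A be a finite-dimensional algebra over an algebraically closed field. Then the following are equivalent: (1) there exists a positive integer d such that A admits infinitely many pairwise non-isomorphic bricks of k-dimension d; (2) there exists a positive integer d and an infinite family {X_i}_{i∈I} of pairwise non-isomorphic A-modules of k-dimension d such that for every pair of distinct indices i, j ∈ I, either Hom_A(X_i, X_j) = 0 or Hom_A(X_j, X_i) = 0. -/
universe u v

open Module

variable {k A : Type u} [Field k] [Ring A] [Algebra k A]

/-!
Suppose there is a nonzero homomorphism `M → N`, and let `B` be minimal among the images of all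
such homomorphisms. Every nonzero endomorphism of `B` is surjective, so `B` is a brick; it is both
a quotient of `M` and a submodule of `N`.

Choose `d` minimal such that there are infinitely many bricks of dimension `d`. Only finitely many
bricks are small, i.e. of dimension less than `d`, so infinitely many of the bricks of dimension
`d` have the same small bricks as submodules. Any two of these, `M` and `N`, are Hom-orthogonal:
a nonzero `M → N` would yield a small brick `B` that is a quotient of `M` and a submodule of `N`,
hence also a submodule of `M`, and the composite `M → B → M` would be a nonzero endomorphism of the
brick `M` that is not injective.

Conversely, let `B i` be a brick that is both a quotient and a submodule of `X i`. An isomorphism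
`B i ≅ B j` gives nonzero homomorphisms `X i → X j` and `X j → X i`.
-/

section LinearMaps

theorem comp_ne_zero_of_surjective_of_injective {R M B N : Type*} [Semiring R]
    [AddCommMonoid M] [Module R M] [AddCommMonoid B] [Module R B] [Nontrivial B]
    [AddCommMonoid N] [Module R N] {p : M →ₗ[R] B} {q : B →ₗ[R] N}
    (hp : Function.Surjective p) (hq : Function.Injective q) : q ∘ₗ p ≠ 0 := by
  obtain ⟨b, hb⟩ := exists_ne (0 : B)
  obtain ⟨x, rfl⟩ := hp b
  exact fun h => hb (hq ((LinearMap.congr_fun h x).trans (map_zero q).symm))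

theorem exists_hom_forall_end_range_surjective {R M N : Type*} [Ring R]
    [AddCommGroup M] [Module R M] [AddCommGroup N] [Module R N] [IsArtinian R N]
    {f : M →ₗ[R] N} (hf : f ≠ 0) :
    ∃ h : M →ₗ[R] N, h ≠ 0 ∧
      ∀ g : Module.End R (LinearMap.range h), g ≠ 0 → Function.Surjective g := by
  obtain ⟨_, ⟨h, hh, rfl⟩, hmin⟩ := IsArtinian.set_has_minimal
    {L : Submodule R N | ∃ h : M →ₗ[R] N, h ≠ 0 ∧ LinearMap.range h = L} ⟨_, f, hf, rfl⟩
  refine ⟨h, hh, fun g hg => ?_⟩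
  let L := LinearMap.range h
  let h' : M →ₗ[R] N := L.subtype ∘ₗ g ∘ₗ h.rangeRestrict
  have hrange : LinearMap.range h' = (LinearMap.range g).map L.subtype := by
    rw [LinearMap.range_comp, LinearMap.range_comp_of_range_eq_top _ h.range_rangeRestrict]
  have hmap : Function.Injective (Submodule.map L.subtype) :=
    Submodule.map_injective_of_injective L.injective_subtype
  have hne : h' ≠ 0 := fun h0 => hg <| LinearMap.range_eq_bot.mp <| hmap <| by
    rw [← hrange, h0, LinearMap.range_zero, Submodule.map_bot]
  have hle : LinearMap.range h' ≤ L := hrange.trans_le (Submodule.map_subtype_le _ _)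
  have heq : LinearMap.range h' = L := eq_of_le_of_not_lt hle (hmin _ ⟨h', hne, rfl⟩)
  exact LinearMap.range_eq_top.mp <| hmap <| by rw [← hrange, heq, Submodule.map_subtype_top]

theorem isDomain_end_of_forall_surjective {R M : Type*} [Semiring R] [AddCommGroup M] [Module R M]
    [Nontrivial M] (h : ∀ g : Module.End R M, g ≠ 0 → Function.Surjective g) :
    IsDomain (Module.End R M) := by
  have : NoZeroDivisors (Module.End R M) :=
    ⟨fun {a b} hab => or_iff_not_imp_right.mpr fun hb => by
      ext x
      obtain ⟨y, rfl⟩ := h b hb x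
      exact LinearMap.congr_fun hab y⟩
  exact NoZeroDivisors.to_isDomain _

end LinearMaps

namespace FDMod

section Bricks

theorem Iso.symm {M N : FDMod k A} (h : M.Iso N) : N.Iso M :=
  h.map LinearEquiv.symm

theorem IsBrick.finrank_pos {B : FDMod k A} (hB : B.IsBrick) : 0 < finrank k B.carrier :=
  have := hB.1
  Module.finrank_pos

theorem IsBrick.injective_of_ne_zero {B : FDMod k A} (hB : B.IsBrick)
    {f : B.carrier →ₗ[A] B.carrier} (hf : f ≠ 0) : Function.Injective f := by
  obtain ⟨c, hc⟩ := hB.2 f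
  have hc0 : c ≠ 0 := by
    rintro rfl
    exact hf (LinearMap.ext fun x => by rw [hc, zero_smul, LinearMap.zero_apply])
  intro x y hxy
  rw [hc, hc] at hxy
  exact smul_right_injective _ hc0 hxy

theorem isBrick_of_forall_surjective [IsAlgClosed k] {M : FDMod k A} [Nontrivial M.carrier]
    (h : ∀ g : Module.End A M.carrier, g ≠ 0 → Function.Surjective g) : M.IsBrick := by
  have : IsDomain (Module.End A M.carrier) := isDomain_end_of_forall_surjective h
  refine ⟨inferInstance, fun f => ?_⟩
  obtain ⟨c, rfl⟩ := (IsAlgClosed.algebraMap_bijective_of_isIntegral (k := k)).2 f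
  exact ⟨c, fun _ => rfl⟩

theorem exists_isBrick_of_hom_ne_zero [IsAlgClosed k] {M N : FDMod k A}
    {f : M.carrier →ₗ[A] N.carrier} (hf : f ≠ 0) :
    ∃ B : FDMod k A, B.IsBrick ∧
      (∃ p : M.carrier →ₗ[A] B.carrier, Function.Surjective p) ∧
      ∃ q : B.carrier →ₗ[A] N.carrier, Function.Injective q := by
  have : IsArtinian A N.carrier := isArtinian_of_tower k inferInstance
  obtain ⟨h, hh, hsurj⟩ := exists_hom_forall_end_range_surjective hf
  let L := LinearMap.range h
  have : FiniteDimensional k L :=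
    FiniteDimensional.of_injective (L.subtype.restrictScalars k) L.injective_subtype
  have : Nontrivial L := by
    rwa [Submodule.nontrivial_iff_ne_bot, ne_eq, LinearMap.range_eq_bot]
  exact ⟨⟨L⟩, isBrick_of_forall_surjective hsurj,
    ⟨h.rangeRestrict, h.surjective_rangeRestrict⟩, L.subtype, L.injective_subtype⟩

theorem iso_of_surjective_of_injective_of_finrank_eq {M B N : FDMod k A}
    {p : M.carrier →ₗ[A] B.carrier} {q : B.carrier →ₗ[A] N.carrier}
    (hp : Function.Surjective p) (hq : Function.Injective q)
    (hMB : finrank k M.carrier = finrank k B.carrier)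
    (hBN : finrank k B.carrier = finrank k N.carrier) : M.Iso N := by
  have hp' : Function.Injective p :=
    (LinearMap.injective_iff_surjective_of_finrank_eq_finrank
      (f := p.restrictScalars k) hMB).mpr hp
  have hq' : Function.Surjective q :=
    (LinearMap.injective_iff_surjective_of_finrank_eq_finrank
      (f := q.restrictScalars k) hBN).mp hq
  exact ⟨(LinearEquiv.ofBijective p ⟨hp', hp⟩).trans (LinearEquiv.ofBijective q ⟨hq, hq'⟩)⟩

theorem finrank_le_of_injective_s9 {M N : FDMod k A} {f : M.carrier →ₗ[A] N.carrier}
    (hf : Function.Injective f) : finrank k M.carrier ≤ finrank k N.carrier :=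
  LinearMap.finrank_le_finrank_of_injective (f := f.restrictScalars k) hf

end Bricks

section IsoClasses

/-- The setoid of isomorphism of finite-dimensional modules. -/
def isoSetoid (k A : Type u) [Field k] [Ring A] [Algebra k A] : Setoid (FDMod k A) where
  r := Iso
  iseqv := ⟨fun _ => ⟨.refl _ _⟩, Iso.symm, fun ⟨e⟩ ⟨f⟩ => ⟨e.trans f⟩⟩

/-- The type of isomorphism classes of finite-dimensional modules. -/
def IsoClass (k A : Type u) [Field k] [Ring A] [Algebra k A] : Type (u + 1) :=
  Quotient (isoSetoid k A)

/-- The isomorphism class of a module. -/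
def isoClass (M : FDMod k A) : IsoClass k A :=
  Quotient.mk _ M

theorem isoClass_eq_iff {M N : FDMod k A} : M.isoClass = N.isoClass ↔ M.Iso N :=
  Quotient.eq

theorem injective_isoClass {I : Type*} {X : I → FDMod k A}
    (hX : ∀ i j, i ≠ j → ¬(X i).Iso (X j)) : Function.Injective fun i => (X i).isoClass :=
  fun i j h => by_contra fun hij => hX i j hij (isoClass_eq_iff.mp h)

/-- The isomorphism classes of the submodules of `M`. A submodule of `M` is encoded as a module
that admits an injective homomorphism to `M`. -/
def subClasses (M : FDMod k A) : Set (IsoClass k A) :=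
  {c | ∃ B : FDMod k A, B.isoClass = c ∧ ∃ q : B.carrier →ₗ[A] M.carrier, Function.Injective q}

theorem isoClass_mem_subClasses {B M : FDMod k A} :
    B.isoClass ∈ M.subClasses ↔ ∃ q : B.carrier →ₗ[A] M.carrier, Function.Injective q := by
  refine ⟨?_, fun h => ⟨B, rfl, h⟩⟩
  rintro ⟨B', hB', q, hq⟩
  obtain ⟨e⟩ := isoClass_eq_iff.mp hB'
  exact ⟨q ∘ₗ e.symm.toLinearMap, hq.comp e.symm.injective⟩

/-- The isomorphism classes of bricks of dimension `d`. -/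
def brickClasses (k A : Type u) [Field k] [Ring A] [Algebra k A] (d : ℕ) : Set (IsoClass k A) :=
  {c | ∃ B : FDMod k A, B.IsBrick ∧ finrank k B.carrier = d ∧ B.isoClass = c}

theorem infinite_brickClasses_iff {d : ℕ} :
    (brickClasses k A d).Infinite ↔
      ∃ (I : Type u) (X : I → FDMod k A), Infinite I ∧ (∀ i, (X i).IsBrick) ∧
        (∀ i j, i ≠ j → ¬(X i).Iso (X j)) ∧ (∀ i, finrank k (X i).carrier = d) := by
  constructor
  · intro hinf
    let e := hinf.natEmbedding
    choose B hB hdim hclass using fun n => (e n).2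
    refine ⟨ULift ℕ, fun i => B i.down, inferInstance, fun _ => hB _, ?_, fun _ => hdim _⟩
    intro i j hij hiso
    have : (e i.down : IsoClass k A) = e j.down := by
      rw [← hclass, ← hclass, isoClass_eq_iff.mpr hiso]
    exact hij (ULift.down_injective (e.injective (Subtype.ext this)))
  · rintro ⟨I, X, hI, hbrick, hiso, hdim⟩
    exact Set.infinite_of_injective_forall_mem (injective_isoClass hiso)
      fun i => ⟨X i, hbrick i, hdim i, rfl⟩

end IsoClasses

section HomOrthogonality

theorem hom_eq_zero_of_subClasses_subset [IsAlgClosed k] {M N : FDMod k A} (hM : M.IsBrick)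
    (hdim : finrank k M.carrier = finrank k N.carrier) (hiso : ¬M.Iso N)
    (hsub : ∀ e < finrank k N.carrier, brickClasses k A e ∩ N.subClasses ⊆ M.subClasses)
    (f : M.carrier →ₗ[A] N.carrier) : f = 0 := by
  by_contra hf
  obtain ⟨B, hB, ⟨p, hp⟩, q, hq⟩ := exists_isBrick_of_hom_ne_zero hf
  have := hB.1
  obtain hlt | heq := (finrank_le_of_injective_s9 hq).lt_or_eq
  · obtain ⟨r, hr⟩ := isoClass_mem_subClasses.mp
      (hsub _ hlt ⟨⟨B, hB, rfl, rfl⟩, isoClass_mem_subClasses.mpr ⟨q, hq⟩⟩)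
    have hrp : Function.Injective (r ∘ₗ p) :=
      hM.injective_of_ne_zero (comp_ne_zero_of_surjective_of_injective hp hr)
    have hMB : finrank k M.carrier ≤ finrank k B.carrier :=
      finrank_le_of_injective_s9 (f := p) (Function.Injective.of_comp hrp)
    omega
  · exact hiso (iso_of_surjective_of_injective_of_finrank_eq hp hq (hdim.trans heq.symm) heq)

theorem exists_infinite_homOrthFamily [IsAlgClosed k] {d : ℕ}
    (hfin : ∀ e < d, (brickClasses k A e).Finite) {I : Type*} [Infinite I] {X : I → FDMod k A}
    (hbrick : ∀ i, (X i).IsBrick) (hiso : ∀ i j, i ≠ j → ¬(X i).Iso (X j))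
    (hdim : ∀ i, finrank k (X i).carrier = d) :
    ∃ s : Set I, s.Infinite ∧ HomOrthFamily fun i : s => X i := by
  let T : Set (IsoClass k A) := ⋃ e ∈ {e | e < d}, brickClasses k A e
  have : Finite T := (Set.finite_lt_nat d).biUnion hfin
  let F : I → Set T := fun i => Subtype.val ⁻¹' (X i).subClasses
  obtain ⟨S, hS⟩ := Finite.exists_infinite_fiber F
  have hsub (i j : F ⁻¹' {S}) (e : ℕ) (he : e < finrank k (X j).carrier) :
      brickClasses k A e ∩ (X j).subClasses ⊆ (X i).subClasses := by
    rintro c ⟨hc, hcj⟩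
    rw [hdim] at he
    let t : T := ⟨c, Set.mem_biUnion he hc⟩
    have hFij : F i = F j := i.2.trans j.2.symm
    exact (Set.ext_iff.mp hFij t).mpr hcj
  have hiso' (i j : F ⁻¹' {S}) (hij : i ≠ j) : ¬(X i).Iso (X j) :=
    hiso i j (Subtype.coe_ne_coe.mpr hij)
  have hhom (i j : F ⁻¹' {S}) (hij : i ≠ j) (f : (X i).carrier →ₗ[A] (X j).carrier) : f = 0 :=
    hom_eq_zero_of_subClasses_subset (hbrick i) ((hdim i).trans (hdim j).symm) (hiso' i j hij)
      (hsub i j) f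
  exact ⟨F ⁻¹' {S}, Set.infinite_coe_iff.mp hS, fun i => (hbrick i).1, hiso',
    fun i j hij => ⟨hhom i j hij, hhom j i hij.symm⟩⟩

theorem exists_infinite_brickClasses_of_hom_eq_zero [IsAlgClosed k] {d : ℕ} {I : Type*} [Infinite I]
    {X : I → FDMod k A} (hX : ∀ i, Nontrivial (X i).carrier)
    (hdim : ∀ i, finrank k (X i).carrier ≤ d)
    (hhom : ∀ i j, i ≠ j →
      (∀ f : (X i).carrier →ₗ[A] (X j).carrier, f = 0) ∨
      (∀ f : (X j).carrier →ₗ[A] (X i).carrier, f = 0)) :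
    ∃ e, (brickClasses k A e).Infinite := by
  choose B hB hp hq using fun i => exists_isBrick_of_hom_ne_zero (M := X i) (N := X i)
    (one_ne_zero (α := Module.End A (X i).carrier))
  choose p hp using hp
  choose q hq using hq
  have exists_hom (i j) : (B i).Iso (B j) → ∃ f : (X i).carrier →ₗ[A] (X j).carrier, f ≠ 0 := by
    rintro ⟨e⟩
    have := (hB i).1
    exact ⟨(q j ∘ₗ e.toLinearMap) ∘ₗ p i,
      comp_ne_zero_of_surjective_of_injective (hp i) ((hq j).comp e.injective)⟩
  have hiso (i j) (hij : i ≠ j) (hBij : (B i).Iso (B j)) : False := by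
    obtain ⟨f, hf⟩ := exists_hom i j hBij
    obtain ⟨g, hg⟩ := exists_hom j i hBij.symm
    exact (hhom i j hij).elim (fun h => hf (h f)) fun h => hg (h g)
  by_contra! hfin
  have hfin' : (⋃ e ∈ {e | e < d + 1}, brickClasses k A e).Finite :=
    (Set.finite_lt_nat _).biUnion fun e _ => hfin e
  refine Set.infinite_of_injective_forall_mem (injective_isoClass hiso) (fun i => ?_) hfin'
  exact Set.mem_biUnion (Nat.lt_succ_of_le ((finrank_le_of_injective_s9 (hq i)).trans (hdim i)))
    ⟨B i, hB i, rfl, rfl⟩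

end HomOrthogonality

end FDMod

theorem stmt9_general {k A : Type u} [Field k] [IsAlgClosed k] [Ring A] [Algebra k A] :
    List.TFAE [
      ∃ d : ℕ, 0 < d ∧
        ∃ (I : Type u) (X : I → FDMod k A), Infinite I ∧
          (∀ i, (X i).IsBrick) ∧ (∀ i j, i ≠ j → ¬(X i).Iso (X j)) ∧
          (∀ i, finrank k (X i).carrier = d),
      ∃ d : ℕ, 0 < d ∧
        ∃ (I : Type u) (X : I → FDMod k A), Infinite I ∧
          (∀ i, (X i).IsBrick) ∧ HomOrthFamily X ∧ (∀ i, finrank k (X i).carrier = d),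
      ∃ d : ℕ, 0 < d ∧
        ∃ (I : Type u) (X : I → FDMod k A), Infinite I ∧
          (∀ i j, i ≠ j → ¬(X i).Iso (X j)) ∧
          (∀ i, finrank k (X i).carrier = d) ∧
          (∀ i j, i ≠ j →
            (∀ f : (X i).carrier →ₗ[A] (X j).carrier, f = 0) ∨
            (∀ f : (X j).carrier →ₗ[A] (X i).carrier, f = 0))] := by
  classical
  tfae_have 1 → 2 := by
    rintro ⟨d₀, -, h₀⟩
    have hex : ∃ d, (FDMod.brickClasses k A d).Infinite :=
      ⟨d₀, FDMod.infinite_brickClasses_iff.mpr h₀⟩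
    obtain ⟨I, X, hI, hbrick, hiso, hdim⟩ := FDMod.infinite_brickClasses_iff.mp (Nat.find_spec hex)
    obtain ⟨s, hs, horth⟩ := FDMod.exists_infinite_homOrthFamily
      (fun e he => Set.not_infinite.mp (Nat.find_min hex he)) hbrick hiso hdim
    obtain ⟨i⟩ := hI.nonempty
    exact ⟨Nat.find hex, hdim i ▸ (hbrick i).finrank_pos, s, fun i => X i,
      hs.to_subtype, fun i => hbrick i, horth, fun i => hdim i⟩
  tfae_have 2 → 3 := by
    rintro ⟨d, hd, I, X, hI, -, ⟨-, hiso, horth⟩, hdim⟩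
    exact ⟨d, hd, I, X, hI, hiso, hdim, fun i j hij => .inl (horth i j hij).1⟩
  tfae_have 3 → 1 := by
    rintro ⟨d, hd, I, X, hI, -, hdim, hhom⟩
    have hX (i) : Nontrivial (X i).carrier :=
      nontrivial_of_finrank_pos (R := k) (hd.trans_eq (hdim i).symm)
    obtain ⟨e, he⟩ :=
      FDMod.exists_infinite_brickClasses_of_hom_eq_zero hX (fun i => (hdim i).le) hhom
    obtain ⟨_, B, hB, rfl, -⟩ := he.nonempty
    exact ⟨_, hB.finrank_pos, FDMod.infinite_brickClasses_iff.mp he⟩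
  tfae_finish

/-- The following are equivalent: (1) there is a positive integer
`d` such that `A` admits infinitely many pairwise non-isomorphic bricks of
`k`-dimension `d`; (2) there is a positive integer `d` and an infinite family of
pairwise non-isomorphic `A`-modules of `k`-dimension `d` such that for every pair
of distinct indices `i, j`, either `Hom_A(X i, X j) = 0` or `Hom_A(X j, X i) = 0`. -/
theorem stmt9 {k A : Type u} [Field k] [IsAlgClosed k] [Ring A] [Algebra k A]
    [FiniteDimensional k A] :
    (∃ d : ℕ, 0 < d ∧
      ∃ (I : Type u) (X : I → FDMod k A), Infinite I ∧
        (∀ i, (X i).IsBrick) ∧ (∀ i j, i ≠ j → ¬(X i).Iso (X j)) ∧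
        (∀ i, finrank k (X i).carrier = d)) ↔
    (∃ d : ℕ, 0 < d ∧
      ∃ (I : Type u) (X : I → FDMod k A), Infinite I ∧
        (∀ i j, i ≠ j → ¬(X i).Iso (X j)) ∧
        (∀ i, finrank k (X i).carrier = d) ∧
        (∀ i j, i ≠ j →
          (∀ f : (X i).carrier →ₗ[A] (X j).carrier, f = 0) ∨
          (∀ f : (X j).carrier →ₗ[A] (X i).carrier, f = 0))) :=
  stmt9_general.out 0 2
end
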